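/- arXiv:0806.4885 — 10 statements merged into one kernel-verified Lean document; each statement's English description precedes it below -/
import Mathlib

section
/- Let f : ℝ → ℝ be continuously differentiable and let u : ℝ^N → ℝ be a nonconstant C³ function satisfying Δu + f(u) = 0 on all of ℝ^N. Assume that DV ≡ 0 on U, i.e. the normalized gradient V = ∇u/‖∇u‖ has vanishing derivative at every point of U = {x : ∇u(x) ≠ 0}. Then there exist a unit vector e ∈ ℝ^N and a C² function h : ℝ → ℝ such that u(x) = h(⟨x, e⟩) for all x ∈ ℝ^N. -/
open RealInnerProductSpace MeasureTheory Filter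

/-- The Hessian bilinear form of `u : ℝ^N → ℝ` at `x`, applied to `w₁, w₂`. -/
noncomputable def Hess {N : ℕ} (u : EuclideanSpace ℝ (Fin N) → ℝ)
    (x w₁ w₂ : EuclideanSpace ℝ (Fin N)) : ℝ :=
  fderiv ℝ (fun y => fderiv ℝ u y w₁) x w₂

/-- The Laplacian `Δu = tr Hess u`. -/
noncomputable def Lap {N : ℕ} (u : EuclideanSpace ℝ (Fin N) → ℝ)
    (x : EuclideanSpace ℝ (Fin N)) : ℝ :=
  ∑ i : Fin N, Hess u x (EuclideanSpace.single i 1) (EuclideanSpace.single i 1)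

/-- The normalized gradient `V = ∇u / ‖∇u‖` (junk value `0` where `∇u = 0`). -/
noncomputable def NGrad {N : ℕ} (u : EuclideanSpace ℝ (Fin N) → ℝ)
    (x : EuclideanSpace ℝ (Fin N)) : EuclideanSpace ℝ (Fin N) :=
  ‖gradient u x‖⁻¹ • gradient u x

/-- The squared Frobenius norm of a linear map on `ℝ^N`. -/
noncomputable def FrobSq {N : ℕ}
    (A : EuclideanSpace ℝ (Fin N) →L[ℝ] EuclideanSpace ℝ (Fin N)) : ℝ :=
  ∑ i : Fin N, ‖A (EuclideanSpace.single i 1)‖ ^ 2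

/-- The divergence `div Z = ∑ i ∂Zᵢ/∂xᵢ` of a vector field on `ℝ^N`. -/
noncomputable def Divg {N : ℕ} (Z : EuclideanSpace ℝ (Fin N) → EuclideanSpace ℝ (Fin N))
    (x : EuclideanSpace ℝ (Fin N)) : ℝ :=
  ∑ i : Fin N, ⟪fderiv ℝ Z x (EuclideanSpace.single i 1), EuclideanSpace.single i 1⟫

/-- The Frobenius inner product `⟨A, B⟩_F = ∑ᵢⱼ Aᵢⱼ Bᵢⱼ` of two linear maps on `ℝ^N`. -/
noncomputable def FrobInner {N : ℕ}
    (A B : EuclideanSpace ℝ (Fin N) →L[ℝ] EuclideanSpace ℝ (Fin N)) : ℝ :=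
  ∑ i : Fin N, ⟪A (EuclideanSpace.single i 1), B (EuclideanSpace.single i 1)⟫

section Aux

open Set Topology

variable {N : ℕ}

lemma aux_D_contDiff {u : EuclideanSpace ℝ (Fin N) → ℝ} (hu : ContDiff ℝ 3 u) :
    ContDiff ℝ 2 (fderiv ℝ u) :=
  hu.fderiv_right (by norm_num)

lemma aux_H_cont {u : EuclideanSpace ℝ (Fin N) → ℝ} (hu : ContDiff ℝ 3 u) :
    Continuous (fderiv ℝ (fderiv ℝ u)) :=
  (aux_D_contDiff hu).continuous_fderiv (by norm_num)

lemma aux_symm {u : EuclideanSpace ℝ (Fin N) → ℝ} (hu : ContDiff ℝ 3 u)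
    (x v w : EuclideanSpace ℝ (Fin N)) :
    fderiv ℝ (fderiv ℝ u) x v w = fderiv ℝ (fderiv ℝ u) x w v :=
  (hu.contDiffAt.isSymmSndFDerivAt (by simp; norm_num)) v w

lemma aux_D_hasDerivAt {u : EuclideanSpace ℝ (Fin N) → ℝ} (hu : ContDiff ℝ 3 u)
    (z v w : EuclideanSpace ℝ (Fin N)) (t : ℝ) :
    HasDerivAt (fun s : ℝ => fderiv ℝ u (z + s • v) w)
      (fderiv ℝ (fderiv ℝ u) (z + t • v) v w) t := by
  have h1 : HasDerivAt (fun s : ℝ => z + s • v) v t := by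
    simpa using ((hasDerivAt_id t).smul_const v).const_add z
  have h2 := (((aux_D_contDiff hu).differentiable (by norm_num)) (z + t • v)).hasFDerivAt
  have h3 := h2.comp_hasDerivAt t h1
  have := h3.clm_apply (hasDerivAt_const t w)
  simpa using this

lemma aux_Hess {u : EuclideanSpace ℝ (Fin N) → ℝ} (hu : ContDiff ℝ 3 u)
    (x v w : EuclideanSpace ℝ (Fin N)) :
    Hess u x v w = fderiv ℝ (fderiv ℝ u) x w v := by
  have h2 := (((aux_D_contDiff hu).differentiable (by norm_num)) x).hasFDerivAt
  have := h2.clm_apply (hasFDerivAt_const v x)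
  unfold Hess
  rw [this.fderiv]
  simp

lemma aux_grad_diff {u : EuclideanSpace ℝ (Fin N) → ℝ} (hu : ContDiff ℝ 3 u) :
    Differentiable ℝ (gradient u) := by
  have h : Differentiable ℝ (fderiv ℝ u) := (aux_D_contDiff hu).differentiable (by norm_num)
  exact (InnerProductSpace.toDual ℝ (EuclideanSpace ℝ (Fin N))).symm.differentiable.comp h

lemma aux_const {u : EuclideanSpace ℝ (Fin N) → ℝ} (hu : ContDiff ℝ 3 u)
    (hDV : ∀ x, gradient u x ≠ 0 → fderiv ℝ (NGrad u) x = 0)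
    {S : Set (EuclideanSpace ℝ (Fin N))} (hS : IsPreconnected S)
    (hSU : ∀ x ∈ S, gradient u x ≠ 0) {a b : EuclideanSpace ℝ (Fin N)}
    (ha : a ∈ S) (hb : b ∈ S) : NGrad u a = NGrad u b := by
  set U := {x | gradient u x ≠ 0} with hU
  have hUo : IsOpen U := isOpen_ne.preimage (aux_grad_diff hu).continuous
  have hC := hS.subset_connectedComponentIn ha (F := U) hSU
  have hCU := connectedComponentIn_subset U a
  refine (hUo.connectedComponentIn (x := a)).is_const_of_fderiv_eq_zero (𝕜 := ℝ)
    isPreconnected_connectedComponentIn (f := NGrad u) ?_ ?_ (hC ha) (hC hb)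
  · intro x hx
    have hd := aux_grad_diff hu x
    have hx' : gradient u x ≠ 0 := hCU hx
    exact (((hd.norm ℝ hx').inv (norm_ne_zero_iff.2 hx')).smul hd).differentiableWithinAt
  · intro x hx
    exact hDV x (hCU hx)

lemma aux_D_eq {u : EuclideanSpace ℝ (Fin N) → ℝ} (x w : EuclideanSpace ℝ (Fin N)) :
    fderiv ℝ u x w = ‖gradient u x‖ * ⟪NGrad u x, w⟫ := by
  rw [← inner_gradient_left, NGrad, real_inner_smul_left]
  by_cases h : gradient u x = 0
  · simp [h]
  · rw [mul_inv_cancel_left₀ (norm_ne_zero_iff.2 h)]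

lemma aux_grad_ne {u : EuclideanSpace ℝ (Fin N) → ℝ} {x w : EuclideanSpace ℝ (Fin N)}
    (h : fderiv ℝ u x w ≠ 0) : gradient u x ≠ 0 := by
  intro h0
  apply h
  rw [← inner_gradient_left, h0, inner_zero_left]

lemma aux_mono {u : EuclideanSpace ℝ (Fin N) → ℝ} (hu : ContDiff ℝ 3 u) (l : ℝ)
    (z e : EuclideanSpace ℝ (Fin N)) (δ : ℝ)
    (h : ∀ t ∈ Icc 0 δ, 0 < l * fderiv ℝ (fderiv ℝ u) (z + t • e) e e) :
    StrictMonoOn (fun t : ℝ => l * fderiv ℝ u (z + t • e) e) (Icc 0 δ) := by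
  have hd : ∀ t, HasDerivAt (fun t : ℝ => l * fderiv ℝ u (z + t • e) e)
      (l * fderiv ℝ (fderiv ℝ u) (z + t • e) e e) t :=
    fun t => (aux_D_hasDerivAt hu z e e t).const_mul l
  refine strictMonoOn_of_deriv_pos (convex_Icc _ _)
    (fun t _ => (hd t).continuousAt.continuousWithinAt) ?_
  intro t ht
  rw [(hd t).deriv]
  exact h t (interior_subset ht)

lemma aux_line_cont (z e : EuclideanSpace ℝ (Fin N)) : Continuous (fun t : ℝ => z + t • e) := by
  fun_prop

/-- One side of a degenerate hyperplane. -/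
lemma aux_A {u : EuclideanSpace ℝ (Fin N) → ℝ} (hu : ContDiff ℝ 3 u)
    (hDV : ∀ x, gradient u x ≠ 0 → fderiv ℝ (NGrad u) x = 0)
    (x e : EuclideanSpace ℝ (Fin N)) (he : ‖e‖ = 1)
    (hR1 : ∀ w, ⟪w, e⟫ = 0 → fderiv ℝ u x w = 0)
    (hR2 : ∀ w, ⟪w, e⟫ = 0 → fderiv ℝ (fderiv ℝ u) x e w = 0)
    (h0 : fderiv ℝ u x e = 0) (l : ℝ) (hl : l = fderiv ℝ (fderiv ℝ u) x e e) (hl0 : l ≠ 0) :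
    ∃ r > 0, ∀ y ∈ Metric.ball x r, 0 < l * fderiv ℝ u y e →
      ∀ w, ⟪w, e⟫ = 0 → fderiv ℝ u y w = 0 := by
  have hHc : Continuous (fun y => l * fderiv ℝ (fderiv ℝ u) y e e) := by
    have := aux_H_cont hu
    fun_prop
  have hDc : Continuous (fun y => l * fderiv ℝ u y e) := by
    have := (aux_D_contDiff hu).continuous
    fun_prop
  have hpos : 0 < l * fderiv ℝ (fderiv ℝ u) x e e := by
    rw [← hl]; exact mul_self_pos.2 hl0
  obtain ⟨ρ, hρ, hball⟩ := Metric.mem_nhds_iff.1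
    ((isOpen_lt continuous_const hHc).mem_nhds (show x ∈ {y | _ < _} from hpos))
  set δ := ρ / 2 with hδ
  have hδ0 : 0 < δ := by positivity
  have hnear : ∀ y, ∀ t ∈ Icc 0 δ, dist y x < δ → y + t • e ∈ Metric.ball x ρ := by
    intro y t ht hy
    rw [Metric.mem_ball]
    calc dist (y + t • e) x ≤ dist (y + t • e) y + dist y x := dist_triangle _ _ _
      _ < δ + δ := by
        have : dist (y + t • e) y = t := by
          simp [dist_eq_norm, norm_smul, he, abs_of_nonneg ht.1]
        rw [this]; linarith [ht.2]
      _ = ρ := by rw [hδ]; ring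
  have hmono : ∀ y, dist y x < δ →
      StrictMonoOn (fun t : ℝ => l * fderiv ℝ u (y + t • e) e) (Icc 0 δ) :=
    fun y hy => aux_mono hu l y e δ (fun t ht => hball (hnear y t ht hy))
  have hxpos : ∀ t ∈ Ioc 0 δ, 0 < l * fderiv ℝ u (x + t • e) e := by
    intro t ht
    have := hmono x (by simpa using hδ0) (left_mem_Icc.2 hδ0.le) ⟨ht.1.le, ht.2⟩ ht.1
    simpa [h0] using this
  obtain ⟨r₁, hr₁, hball₁⟩ := Metric.mem_nhds_iff.1
    ((isOpen_lt continuous_const hDc).mem_nhds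
      (show x + δ • e ∈ {y | _ < _} from hxpos δ ⟨hδ0, le_rfl⟩))
  refine ⟨min r₁ δ, lt_min hr₁ hδ0, ?_⟩
  intro y hy hyp w hw
  have hy1 : dist y x < r₁ := lt_of_lt_of_le hy (min_le_left _ _)
  have hy2 : dist y x < δ := lt_of_lt_of_le hy (min_le_right _ _)
  have hne : ∀ z, 0 < l * fderiv ℝ u z e → gradient u z ≠ 0 := by
    intro z hz
    refine aux_grad_ne (w := e) ?_
    rintro h
    simp [h] at hz
  have e1 : NGrad u y = NGrad u (y + δ • e) := by
    refine aux_const hu hDV (S := (fun t : ℝ => y + t • e) '' Icc 0 δ)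
      (isPreconnected_Icc.image _ (aux_line_cont y e).continuousOn) ?_
      ⟨0, left_mem_Icc.2 hδ0.le, by simp⟩ ⟨δ, right_mem_Icc.2 hδ0.le, rfl⟩
    rintro _ ⟨t, ht, rfl⟩
    apply hne
    have := (hmono y hy2).monotoneOn (left_mem_Icc.2 hδ0.le) ht ht.1
    simp only [zero_smul, add_zero] at this
    exact hyp.trans_le this
  have e2 : NGrad u (y + δ • e) = NGrad u (x + δ • e) := by
    refine aux_const hu hDV (S := Metric.ball (x + δ • e) r₁)
      (convex_ball _ _).isPreconnected (fun z hz => hne z (hball₁ hz)) ?_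
      (Metric.mem_ball_self hr₁)
    simpa using hy1
  have e3 : ∀ t ∈ Ioc 0 δ, NGrad u (x + t • e) = NGrad u (x + δ • e) := by
    intro t ht
    refine aux_const hu hDV (S := (fun t : ℝ => x + t • e) '' Ioc 0 δ)
      (isPreconnected_Ioc.image _ (aux_line_cont x e).continuousOn) ?_
      ⟨t, ht, rfl⟩ ⟨δ, right_mem_Ioc.2 hδ0, rfl⟩
    rintro _ ⟨t, ht, rfl⟩
    exact hne _ (hxpos t ht)
  set v := NGrad u y with hv
  have e4 : ∀ t ∈ Icc 0 δ, fderiv ℝ u (x + t • e) w * ⟪v, e⟫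
      - fderiv ℝ u (x + t • e) e * ⟪v, w⟫ = 0 := by
    intro t ht
    rcases ht.1.eq_or_lt with h | h
    · subst h
      simp [h0, hR1 w hw]
    · rw [aux_D_eq, aux_D_eq _ e, e3 t ⟨h, ht.2⟩, ← e2, ← e1]
      ring
  have hd := (((aux_D_hasDerivAt hu x e w 0).mul_const ⟪v, e⟫).sub
    ((aux_D_hasDerivAt hu x e e 0).mul_const ⟪v, w⟫)).hasDerivWithinAt (s := Icc 0 δ)
  have hd0 := (hasDerivWithinAt_const (0 : ℝ) (Icc 0 δ) (0 : ℝ))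
  have hd1 := hd0.congr (f₁ := fun t : ℝ => fderiv ℝ u (x + t • e) w * ⟪v, e⟫
      - fderiv ℝ u (x + t • e) e * ⟪v, w⟫) e4 (e4 0 (left_mem_Icc.2 hδ0.le))
  have huniq : UniqueDiffWithinAt ℝ (Icc 0 δ) 0 :=
    uniqueDiffOn_Icc hδ0 0 (left_mem_Icc.2 hδ0.le)
  have key := huniq.eq_deriv _ hd hd1
  simp only [zero_smul, add_zero, hR2 w hw, ← hl, zero_mul, zero_sub, neg_eq_zero,
    mul_eq_zero, hl0, false_or] at key
  rw [aux_D_eq, ← hv, key, mul_zero]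

lemma aux_open {u : EuclideanSpace ℝ (Fin N) → ℝ} (hu : ContDiff ℝ 3 u)
    (hDV : ∀ x, gradient u x ≠ 0 → fderiv ℝ (NGrad u) x = 0)
    (x e : EuclideanSpace ℝ (Fin N)) (he : ‖e‖ = 1)
    (hR1 : ∀ w, ⟪w, e⟫ = 0 → fderiv ℝ u x w = 0)
    (hR2 : ∀ w, ⟪w, e⟫ = 0 → fderiv ℝ (fderiv ℝ u) x e w = 0)
    (h0 : fderiv ℝ u x e ≠ 0 ∨ fderiv ℝ (fderiv ℝ u) x e e ≠ 0) :
    x ∈ interior {y | ∀ w, ⟪w, e⟫ = 0 → fderiv ℝ u y w = 0} := by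
  rw [mem_interior_iff_mem_nhds]
  by_cases hx : fderiv ℝ u x e = 0
  · have hl0 : fderiv ℝ (fderiv ℝ u) x e e ≠ 0 := h0.resolve_left (by simpa using hx)
    set l := fderiv ℝ (fderiv ℝ u) x e e with hl
    obtain ⟨r₁, hr₁, H₁⟩ := aux_A hu hDV x e he hR1 hR2 hx l hl hl0
    obtain ⟨r₂, hr₂, H₂⟩ := aux_A hu hDV x (-e) (by simpa using he)
      (fun w hw => hR1 w (by simpa using hw))
      (fun w hw => by simpa using hR2 w (by simpa using hw)) (by simpa using hx) l
      (by simpa using hl) hl0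
    have hHc : Continuous (fun y => l * fderiv ℝ (fderiv ℝ u) y e e) := by
      have := aux_H_cont hu
      fun_prop
    have hpos : 0 < l * fderiv ℝ (fderiv ℝ u) x e e := by
      rw [← hl]; exact mul_self_pos.2 hl0
    obtain ⟨ρ, hρ, hball⟩ := Metric.mem_nhds_iff.1
      ((isOpen_lt continuous_const hHc).mem_nhds (show x ∈ {y | _ < _} from hpos))
    set r := min ρ (min r₁ r₂) with hr
    have hr0 : 0 < r := lt_min hρ (lt_min hr₁ hr₂)
    refine mem_of_superset (Metric.ball_mem_nhds x hr0) ?_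
    intro y hy w hw
    have hyr₁ : ∀ z ∈ Metric.ball x r, z ∈ Metric.ball x r₁ := fun z hz =>
      Metric.ball_subset_ball ((min_le_right _ _).trans (min_le_left _ _)) hz
    have hyr₂ : y ∈ Metric.ball x r₂ :=
      Metric.ball_subset_ball ((min_le_right _ _).trans (min_le_right _ _)) hy
    rcases lt_trichotomy (l * fderiv ℝ u y e) 0 with h | h | h
    · refine H₂ y hyr₂ ?_ w (by simpa using hw)
      simpa using h
    · have hm : ∀ᶠ t in 𝓝 (0 : ℝ), y + t • e ∈ Metric.ball x r := by
        refine (aux_line_cont y e).continuousAt.eventually_mem (Metric.isOpen_ball.mem_nhds ?_)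
        simpa using hy
      obtain ⟨ε, hε, hεb⟩ := Metric.mem_nhds_iff.1 hm
      have hin : ∀ t ∈ Icc 0 (ε / 2), y + t • e ∈ Metric.ball x r := by
        intro t ht
        apply hεb
        rw [Metric.mem_ball, Real.dist_eq, sub_zero, abs_of_nonneg ht.1]
        linarith [ht.2]
      have hmono := aux_mono hu l y e (ε / 2) (fun t ht =>
        hball (Metric.ball_subset_ball (min_le_left _ _) (hin t ht)))
      have hz : ∀ t ∈ Ioc 0 (ε / 2), fderiv ℝ u (y + t • e) w = 0 := by
        intro t ht
        have ht' : t ∈ Icc 0 (ε / 2) := ⟨ht.1.le, ht.2⟩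
        refine H₁ _ (hyr₁ _ (hin t ht')) ?_ w hw
        have := hmono (left_mem_Icc.2 (by positivity)) ht' ht.1
        simp only [zero_smul, add_zero] at this
        rwa [h] at this
      have hc : Tendsto (fun t : ℝ => fderiv ℝ u (y + t • e) w) (𝓝[>] 0)
          (𝓝 (fderiv ℝ u (y + (0 : ℝ) • e) w)) :=
        (aux_D_hasDerivAt hu y e w 0).continuousAt.continuousWithinAt
      have hc' : Tendsto (fun t : ℝ => fderiv ℝ u (y + t • e) w) (𝓝[>] 0) (𝓝 0) := by
        refine tendsto_const_nhds.congr' ?_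
        filter_upwards [Ioc_mem_nhdsGT (show (0 : ℝ) < ε / 2 by positivity)] with t ht
        exact (hz t ht).symm
      simpa using tendsto_nhds_unique hc hc'
    · exact H₁ y (hyr₁ y hy) h w hw
  · have hg := aux_grad_ne hx
    obtain ⟨ρ, hρ, hball⟩ := Metric.mem_nhds_iff.1
      ((isOpen_ne.preimage (aux_grad_diff hu).continuous).mem_nhds
        (show x ∈ gradient u ⁻¹' {y | y ≠ 0} from hg))
    refine mem_of_superset (Metric.ball_mem_nhds x hρ) ?_
    intro y hy w hw
    have hV : NGrad u y = NGrad u x := aux_const hu hDV (convex_ball x ρ).isPreconnected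
      (fun z hz => hball hz) hy (Metric.mem_ball_self hρ)
    have := hR1 w hw
    rw [aux_D_eq, mul_eq_zero] at this
    rw [aux_D_eq, hV, this.resolve_left (norm_ne_zero_iff.2 hg), mul_zero]

/-- On `interior Z`, the Hessian kills `e^⊥`. -/
lemma aux_int {u : EuclideanSpace ℝ (Fin N) → ℝ} (hu : ContDiff ℝ 3 u)
    (x e : EuclideanSpace ℝ (Fin N))
    (hx : x ∈ interior {y | ∀ w, ⟪w, e⟫ = 0 → fderiv ℝ u y w = 0})
    (v w : EuclideanSpace ℝ (Fin N)) (hw : ⟪w, e⟫ = 0) :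
    fderiv ℝ (fderiv ℝ u) x v w = 0 := by
  have h1 : (fun y => fderiv ℝ u y w) =ᶠ[𝓝 x] fun _ => 0 := by
    filter_upwards [mem_interior_iff_mem_nhds.1 hx] with y hy
    exact hy w hw
  rw [← aux_Hess hu, Hess, h1.fderiv_eq]
  simp

lemma aux_dec (e w : EuclideanSpace ℝ (Fin N)) (he : ‖e‖ = 1) :
    ⟪w - ⟪w, e⟫ • e, e⟫ = 0 := by
  rw [inner_sub_left, real_inner_smul_left, real_inner_self_eq_norm_sq, he]
  ring

lemma aux_lin (e w : EuclideanSpace ℝ (Fin N)) (he : ‖e‖ = 1)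
    (L : EuclideanSpace ℝ (Fin N) →L[ℝ] ℝ) (hL : ∀ w, ⟪w, e⟫ = 0 → L w = 0) :
    L w = ⟪w, e⟫ * L e := by
  have := hL _ (aux_dec e w he)
  rw [map_sub, map_smul, smul_eq_mul] at this
  linarith

lemma aux_lap {u : EuclideanSpace ℝ (Fin N) → ℝ} (hu : ContDiff ℝ 3 u)
    (x e : EuclideanSpace ℝ (Fin N)) (he : ‖e‖ = 1)
    (hR2 : ∀ v w, ⟪w, e⟫ = 0 → fderiv ℝ (fderiv ℝ u) x v w = 0) :
    Lap u x = fderiv ℝ (fderiv ℝ u) x e e := by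
  have h : ∀ v, fderiv ℝ (fderiv ℝ u) x v v = (⟪v, e⟫ * ⟪v, e⟫) * fderiv ℝ (fderiv ℝ u) x e e := by
    intro v
    rw [aux_lin e v he _ (hR2 v), aux_symm hu, aux_lin e v he _ (hR2 e)]
    ring
  unfold Lap
  rw [Finset.sum_congr rfl (fun i _ => (aux_Hess hu x _ _).trans (h _)), ← Finset.sum_mul]
  have hs : ∑ i : Fin N, ⟪EuclideanSpace.single i (1 : ℝ), e⟫ * ⟪EuclideanSpace.single i (1 : ℝ), e⟫
      = 1 := by
    have := (EuclideanSpace.basisFun (Fin N) ℝ).sum_inner_mul_inner e e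
    rw [real_inner_self_eq_norm_sq, he] at this
    simp only [EuclideanSpace.basisFun_apply] at this
    rw [one_pow] at this
    refine Eq.trans (Finset.sum_congr rfl fun i _ => ?_) this
    rw [real_inner_comm e]
  rw [hs, one_mul]

lemma aux_ode (f : ℝ → ℝ) (hf : ContDiff ℝ 1 f) (κ T c : ℝ) (hT : 0 ≤ T) (hc : f c = 0)
    (φ ψ : ℝ → ℝ)
    (hφ : ∀ t ∈ Icc 0 T, HasDerivAt φ (κ * ψ t) t)
    (hψ : ∀ t ∈ Icc 0 T, HasDerivAt ψ (-(κ * f (φ t))) t)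
    (h1 : φ T = c) (h2 : ψ T = 0) : ψ 0 = 0 := by
  set F : ℝ × ℝ → ℝ × ℝ := fun p => (κ * p.2, -(κ * f p.1)) with hF
  have hFc : ContDiff ℝ 1 F := by
    rw [hF]; fun_prop
  have hd : ∀ t ∈ Icc 0 T, HasDerivAt (fun t => (φ t, ψ t)) (F (φ t, ψ t)) t :=
    fun t ht => (hφ t ht).prodMk (hψ t ht)
  have hcont : ContinuousOn (fun t => (φ t, ψ t)) (Icc 0 T) :=
    fun t ht => (hd t ht).continuousAt.continuousWithinAt
  set s := (fun t => (φ t, ψ t)) '' Icc 0 T with hs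
  obtain ⟨K, hK⟩ := LocallyLipschitzOn.exists_lipschitzOnWith_of_compact
    (isCompact_Icc.image_of_continuousOn hcont) (hFc.locallyLipschitz.locallyLipschitzOn (s := s))
  have hTs : (c, (0 : ℝ)) ∈ s := ⟨T, right_mem_Icc.2 hT, by simp [h1, h2]⟩
  have := ODE_solution_unique_of_mem_Icc_left (v := fun _ => F) (s := fun _ => s) (K := K)
    (a := 0) (b := T) (f := fun t => (φ t, ψ t)) (g := fun _ => (c, (0 : ℝ)))
    (fun _ _ => hK) hcont (fun t ht => (hd t ⟨ht.1.le, ht.2⟩).hasDerivWithinAt)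
    (fun t ht => ⟨t, ⟨ht.1.le, ht.2⟩, rfl⟩) continuousOn_const
    (fun t ht => by
      have : F (c, 0) = 0 := by simp [hF, hc]
      rw [this]
      exact hasDerivWithinAt_const _ _ _)
    (fun t ht => hTs) (by simp [h1, h2])
  have h := this (left_mem_Icc.2 hT)
  exact congrArg Prod.snd h

lemma aux_all (f : ℝ → ℝ) (hf : ContDiff ℝ 1 f)
    (u : EuclideanSpace ℝ (Fin N) → ℝ) (hu : ContDiff ℝ 3 u)
    (hpde : ∀ x, Lap u x + f (u x) = 0)
    (hDV : ∀ x, gradient u x ≠ 0 → fderiv ℝ (NGrad u) x = 0)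
    (x₀ e : EuclideanSpace ℝ (Fin N)) (he : ‖e‖ = 1)
    (hx₀ : x₀ ∈ interior {y | ∀ w, ⟪w, e⟫ = 0 → fderiv ℝ u y w = 0})
    (hx₀e : fderiv ℝ u x₀ e ≠ 0) (y : EuclideanSpace ℝ (Fin N)) :
    y ∈ interior {y | ∀ w, ⟪w, e⟫ = 0 → fderiv ℝ u y w = 0} := by
  set Z := {y | ∀ w, ⟪w, e⟫ = 0 → fderiv ℝ u y w = 0} with hZ
  by_contra hy
  set d := y - x₀ with hdd
  set γ : ℝ → EuclideanSpace ℝ (Fin N) := fun t => x₀ + t • d with hγ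
  have hγc : Continuous γ := aux_line_cont x₀ d
  set B := Icc (0 : ℝ) 1 ∩ γ ⁻¹' (interior Z)ᶜ with hB
  have hBc : IsCompact B :=
    isCompact_Icc.inter_right (isOpen_interior.isClosed_compl.preimage hγc)
  have hBne : B.Nonempty := ⟨1, ⟨by simp, by simpa [hγ, hdd] using hy⟩⟩
  set T := sInf B with hTdef
  have hTB : T ∈ B := hBc.sInf_mem hBne
  have hlt : ∀ t ∈ Ico 0 T, γ t ∈ interior Z := by
    intro t ht
    by_contra hn
    have : T ≤ t := csInf_le hBc.bddBelow ⟨⟨ht.1, ht.2.le.trans hTB.1.2⟩, hn⟩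
    linarith [ht.2]
  have hT0 : 0 < T := by
    rcases hTB.1.1.eq_or_lt with h | h
    · exfalso
      apply hTB.2
      rw [← h]
      simpa [hγ] using hx₀
    · exact h
  -- the closed set containing the segment
  set R := {x | ∀ w, ⟪w, e⟫ = 0 → fderiv ℝ u x w = 0 ∧
    ∀ v, fderiv ℝ (fderiv ℝ u) x v w = 0} with hR
  have hRc : IsClosed R := by
    have h1 := (aux_D_contDiff hu).continuous
    have h2 := aux_H_cont hu
    have : R = ⋂ w, ⋂ (_ : ⟪w, e⟫ = 0), ({x | fderiv ℝ u x w = 0} ∩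
        ⋂ v, {x | fderiv ℝ (fderiv ℝ u) x v w = 0}) := by
      ext x; simp [hR]
    rw [this]
    refine isClosed_iInter fun w => isClosed_iInter fun _ => IsClosed.inter ?_ ?_
    · exact isClosed_eq (by fun_prop) continuous_const
    · exact isClosed_iInter fun v => isClosed_eq (by fun_prop) continuous_const
  have hQR : interior Z ⊆ R := fun x hx w hw =>
    ⟨interior_subset hx w hw, fun v => aux_int hu x e hx v w hw⟩
  have hseg : ∀ t ∈ Icc 0 T, γ t ∈ R := by
    have : Icc 0 T ⊆ γ ⁻¹' R := by
      rw [← closure_Ico hT0.ne]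
      exact closure_minimal (fun t ht => hQR (hlt t ht)) (hRc.preimage hγc)
    exact this
  have hTR := hseg T (right_mem_Icc.2 hT0.le)
  have hdeg : fderiv ℝ u (γ T) e = 0 ∧ fderiv ℝ (fderiv ℝ u) (γ T) e e = 0 := by
    by_contra hn
    rw [not_and_or] at hn
    exact hTB.2 (aux_open hu hDV (γ T) e he (fun w hw => (hTR w hw).1)
      (fun w hw => (hTR w hw).2 e) hn)
  have hpde' : ∀ t ∈ Icc 0 T, fderiv ℝ (fderiv ℝ u) (γ t) e e = - f (u (γ t)) := by
    intro t ht
    rw [← aux_lap hu (γ t) e he (fun v w hw => (hseg t ht w hw).2 v)]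
    linarith [hpde (γ t)]
  have hfc : f (u (γ T)) = 0 := by
    have := hpde' T (right_mem_Icc.2 hT0.le)
    rw [hdeg.2] at this
    linarith
  have := aux_ode f hf ⟪d, e⟫ T (u (γ T)) hT0.le hfc (fun t => u (γ t))
    (fun t => fderiv ℝ u (γ t) e) ?_ ?_ rfl hdeg.1
  · apply hx₀e
    simpa [hγ] using this
  · intro t ht
    have h1 : HasDerivAt (fun t : ℝ => x₀ + t • d) d t := by
      simpa using ((hasDerivAt_id t).smul_const d).const_add x₀
    have h2 := ((hu.differentiable (by norm_num)) (γ t)).hasFDerivAt.comp_hasDerivAt t h1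
    rw [aux_lin e d he _ (fun w hw => (hseg t ht w hw).1)] at h2
    exact h2
  · intro t ht
    have h2 := aux_D_hasDerivAt hu x₀ d e t
    have h3 : fderiv ℝ (fderiv ℝ u) (γ t) d e = -(⟪d, e⟫ * f (u (γ t))) := by
      rw [aux_symm hu, aux_lin e d he _ (fun w hw => (hseg t ht w hw).2 e), hpde' t ht]
      ring
    rw [← h3]
    exact h2

end Aux

/-- If `u` is a nonconstant `C³` solution of `Δu + f(u) = 0` on `ℝ^N`
whose normalized gradient `V = ∇u/‖∇u‖` has vanishing derivative on `U = {∇u ≠ 0}`,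
then `u` is one-dimensional: `u(x) = h(⟨x, e⟩)` for a unit vector `e` and a `C²` profile `h`. -/
theorem statement0 {N : ℕ} (hN : 1 ≤ N) (f : ℝ → ℝ) (hf : ContDiff ℝ 1 f)
    (u : EuclideanSpace ℝ (Fin N) → ℝ) (hu : ContDiff ℝ 3 u)
    (hnc : ∃ x y, u x ≠ u y)
    (hpde : ∀ x, Lap u x + f (u x) = 0)
    (hDV : ∀ x, gradient u x ≠ 0 → fderiv ℝ (NGrad u) x = 0) :
    ∃ e : EuclideanSpace ℝ (Fin N), ‖e‖ = 1 ∧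
      ∃ h : ℝ → ℝ, ContDiff ℝ 2 h ∧ ∀ x, u x = h ⟪x, e⟫ := by
  have hdu : Differentiable ℝ u := hu.differentiable (by norm_num)
  obtain ⟨x₀, hx₀⟩ : ∃ x, gradient u x ≠ 0 := by
    by_contra! hn
    obtain ⟨x, y, hxy⟩ := hnc
    refine hxy (is_const_of_fderiv_eq_zero (𝕜 := ℝ) hdu (fun z => ?_) x y)
    rw [← toDual_gradient, hn z, map_zero]
  have hn0 : ‖gradient u x₀‖ ≠ 0 := norm_ne_zero_iff.2 hx₀
  set e := NGrad u x₀ with he_def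
  have he : ‖e‖ = 1 := by
    rw [he_def, NGrad, norm_smul, norm_inv, norm_norm, inv_mul_cancel₀ hn0]
  have hx₀e : fderiv ℝ u x₀ e ≠ 0 := by
    rw [aux_D_eq, ← he_def, real_inner_self_eq_norm_sq, he]
    simpa using hx₀
  have hint : x₀ ∈ interior {y | ∀ w, ⟪w, e⟫ = 0 → fderiv ℝ u y w = 0} := by
    rw [mem_interior_iff_mem_nhds]
    obtain ⟨ρ, hρ, hball⟩ := Metric.mem_nhds_iff.1
      ((isOpen_ne.preimage (aux_grad_diff hu).continuous).mem_nhds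
        (show x₀ ∈ gradient u ⁻¹' {y | y ≠ 0} from hx₀))
    refine mem_of_superset (Metric.ball_mem_nhds x₀ hρ) ?_
    intro y hy w hw
    have hV : NGrad u y = NGrad u x₀ := aux_const hu hDV (convex_ball x₀ ρ).isPreconnected
      (fun z hz => hball hz) hy (Metric.mem_ball_self hρ)
    rw [aux_D_eq, hV, ← he_def, real_inner_comm, hw, mul_zero]
  have hall : ∀ y w, ⟪w, e⟫ = 0 → fderiv ℝ u y w = 0 := fun y =>
    interior_subset (aux_all f hf u hu hpde hDV x₀ e he hint hx₀e y)
  refine ⟨e, he, fun t => u (t • e), ?_, ?_⟩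
  · have : ContDiff ℝ 3 (fun t : ℝ => u (t • e)) := hu.comp (by fun_prop)
    exact this.of_le (by norm_num)
  · intro x
    set w := x - ⟪x, e⟫ • e with hw
    have hd : ∀ t : ℝ, HasDerivAt (fun t : ℝ => u (⟪x, e⟫ • e + t • w)) 0 t := by
      intro t
      have h1 : HasDerivAt (fun t : ℝ => ⟪x, e⟫ • e + t • w) w t := by
        simpa using ((hasDerivAt_id t).smul_const w).const_add (⟪x, e⟫ • e)
      have h2 := (hdu (⟪x, e⟫ • e + t • w)).hasFDerivAt.comp_hasDerivAt t h1
      rw [hall _ w (aux_dec e x he)] at h2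
      exact h2
    have := is_const_of_deriv_eq_zero (fun t => (hd t).differentiableAt)
      (fun t => (hd t).deriv) 1 0
    simpa [hw] using this
end

section
/- Let N ≥ 1, let L₁, …, L_N > 0, let f : ℝ → ℝ be continuously differentiable, and let u : ℝ^N → ℝ be a nonconstant C³ function that is periodic with periods L_i in each coordinate direction (u(x + L_i e_i) = u(x) for all x and each standard basis vector e_i) and satisfies Δu + f(u) = 0 on ℝ^N. Then u is weakly unstable: there exists a Lipschitz function φ : ℝ^N → ℝ, periodic with the same periods, such that ∫_Q ( ‖∇φ(x)‖² − f'(u(x)) φ(x)² ) dx < 0, where Q = [0,L₁) × ⋯ × [0,L_N) and ∇φ denotes the almost-everywhere defined derivative of φ. -/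
open RealInnerProductSpace MeasureTheory Filter

namespace TorusInst

/-- Periodicity with periods `L i` along the coordinate axes. -/
def Per {N : ℕ} {α : Type*} (L : Fin N → ℝ) (F : EuclideanSpace ℝ (Fin N) → α) : Prop :=
  ∀ (x : EuclideanSpace ℝ (Fin N)) (i : Fin N), F (x + L i • EuclideanSpace.single i 1) = F x

/-- The period cell. -/
def Cell {N : ℕ} (L : Fin N → ℝ) : Set (EuclideanSpace ℝ (Fin N)) :=
  {y | ∀ i, y i ∈ Set.Ico 0 (L i)}

/-- The rescaled standard basis. -/
noncomputable def bas {N : ℕ} (L : Fin N → ℝ) (hL : ∀ i, 0 < L i) :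
    Module.Basis (Fin N) ℝ (EuclideanSpace ℝ (Fin N)) :=
  (EuclideanSpace.basisFun (Fin N) ℝ).toBasis.isUnitSMul (w := L)
    (fun i => (hL i).ne'.isUnit)

section
variable {N : ℕ} {L : Fin N → ℝ} (hL : ∀ i, 0 < L i)

lemma bas_apply (i : Fin N) : bas L hL i = L i • EuclideanSpace.single i (1 : ℝ) := by
  simp [bas, Module.Basis.isUnitSMul_apply]

lemma cell_eq : Cell L = ZSpan.fundamentalDomain (bas L hL) := by
  ext x
  simp only [Cell, Set.mem_ofPred_eq, ZSpan.mem_fundamentalDomain]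
  refine forall_congr' fun i => ?_
  have h : (bas L hL).repr x i = (L i)⁻¹ * x i := by
    rw [bas, Module.Basis.repr_isUnitSMul]
    simp [Units.smul_def]
  rw [h, Set.mem_Ico, Set.mem_Ico, inv_mul_lt_iff₀ (hL i), mul_one, mul_nonneg_iff_of_pos_left (inv_pos.2 (hL i))]

lemma cell_meas (hL : ∀ i, 0 < L i) : MeasurableSet (Cell L) := by
  rw [cell_eq hL]; exact ZSpan.fundamentalDomain_measurableSet _

lemma cell_compact (hL : ∀ i, 0 < L i) : IsCompact (closure (Cell L)) := by
  rw [cell_eq hL]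
  exact (ZSpan.fundamentalDomain_isBounded (bas L hL)).isCompact_closure

lemma cell_fin (hL : ∀ i, 0 < L i) : volume (Cell L) < ⊤ :=
  lt_of_le_of_lt (measure_mono subset_closure) (cell_compact hL).measure_lt_top

lemma per_span {α : Type*} {F : EuclideanSpace ℝ (Fin N) → α} (hF : Per L F)
    (g : EuclideanSpace ℝ (Fin N)) (hg : g ∈ Submodule.span ℤ (Set.range (bas L hL))) :
    ∀ x, F (g + x) = F x := by
  induction hg using Submodule.span_induction with
  | mem x h =>
    obtain ⟨i, rfl⟩ := h
    intro x
    rw [bas_apply, add_comm, hF]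
  | zero => intro x; rw [zero_add]
  | add a b _ _ ha hb => intro x; rw [add_assoc, ha, hb]
  | smul n a _ ha =>
    intro x
    induction n using Int.induction_on generalizing x with
    | zero => simp
    | succ k ih => rw [add_smul, one_smul, add_assoc, ih, ha]
    | pred k ih =>
      rw [← ih x, ← ha (((-(k:ℤ) - 1) • a) + x)]
      congr 1
      rw [sub_smul, one_smul]; abel

lemma per_bdd (hL : ∀ i, 0 < L i) {F : EuclideanSpace ℝ (Fin N) → ℝ} (hF : Per L F) (hc : Continuous F) :
    ∃ C, 0 ≤ C ∧ ∀ x, |F x| ≤ C := by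
  obtain ⟨C, hC⟩ := (cell_compact hL).exists_bound_of_continuousOn hc.continuousOn
  refine ⟨max C 0, le_max_right _ _, fun x => le_trans ?_ (le_max_left _ _)⟩
  have h1 := hC (ZSpan.fract (bas L hL) x)
    (subset_closure (by rw [cell_eq hL]; exact ZSpan.fract_mem_fundamentalDomain _ x))
  have h2 := per_span hL hF _ (ZSpan.floor (bas L hL) x).2 (ZSpan.fract (bas L hL) x)
  rw [ZSpan.fract_apply, add_sub_cancel] at h2
  rw [h2]; exact h1

lemma cont_int (hL : ∀ i, 0 < L i) {F : EuclideanSpace ℝ (Fin N) → ℝ} (hc : Continuous F) :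
    IntegrableOn F (Cell L) :=
  (hc.continuousOn.integrableOn_compact (cell_compact hL)).mono_set subset_closure

lemma int_trans (hL : ∀ i, 0 < L i) {F : EuclideanSpace ℝ (Fin N) → ℝ} (hF : Per L F)
    (h : EuclideanSpace ℝ (Fin N)) :
    ∫ x in Cell L, F (x + h) = ∫ x in Cell L, F x := by
  have : Countable (Submodule.span ℤ (Set.range (bas L hL))).toAddSubgroup :=
    inferInstanceAs (Countable (Submodule.span ℤ (Set.range (bas L hL))))
  have h1 := ZSpan.isAddFundamentalDomain' (bas L hL) (volume : Measure (EuclideanSpace ℝ (Fin N)))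
  have h2 := h1.vadd_of_comm h
  have h3 := h1.setIntegral_eq h2 (f := F) (fun g x => by
    exact per_span hL hF _ g.2 x)
  rw [cell_eq hL, h3, ← Set.image_vadd]
  have := (measurePreserving_vadd h (volume : Measure (EuclideanSpace ℝ (Fin N)))).setIntegral_image_emb
    (measurableEmbedding_const_vadd h) F (ZSpan.fundamentalDomain (bas L hL))
  rw [this]
  simp [add_comm]

lemma Per.trans {α : Type*} {F : EuclideanSpace ℝ (Fin N) → α} (hF : Per L F)
    (h : EuclideanSpace ℝ (Fin N)) : Per L (fun x => F (x + h)) := by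
  intro x i
  show F (_ + _ + h) = _
  rw [add_right_comm, hF]

lemma int_avg (hL : ∀ i, 0 < L i) {F : EuclideanSpace ℝ (Fin N) → ℝ} (hF : Per L F) (hc : Continuous F)
    (h : EuclideanSpace ℝ (Fin N)) :
    IntegrableOn (fun x => ∫ s in (0:ℝ)..1, F (x + s • h)) (Cell L) ∧
    ∫ x in Cell L, ∫ s in (0:ℝ)..1, F (x + s • h) = ∫ x in Cell L, F x := by
  constructor
  · apply cont_int hL
    apply intervalIntegral.continuous_parametric_intervalIntegral_of_continuous'
    fun_prop
  · rw [← intervalIntegral_integral_swap]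
    · simp [int_trans hL hF]
    · obtain ⟨C, hC0, hC⟩ := per_bdd hL hF hc
      have : IsFiniteMeasure (volume.restrict (Cell L)) := ⟨by simpa using cell_fin hL⟩
      have : IsFiniteMeasure (volume.restrict (Set.uIoc (0:ℝ) 1)) := ⟨by simp⟩
      apply Integrable.of_bound (C := C)
      · apply Continuous.aestronglyMeasurable
        unfold Function.uncurry
        fun_prop
      · exact Eventually.of_forall fun x => hC _

/-- The integral of a directional derivative of a periodic function vanishes. -/
lemma int_deriv (hL : ∀ i, 0 < L i) {w D : EuclideanSpace ℝ (Fin N) → ℝ} (hw : Per L w) (hD : Per L D)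
    (hwc : Continuous w) (hDc : Continuous D) (h : EuclideanSpace ℝ (Fin N))
    (hder : ∀ x, HasDerivAt (fun s : ℝ => w (x + s • h)) (D x) 0) :
    ∫ x in Cell L, D x = 0 := by
  rw [← (int_avg hL hD hDc h).2]
  have hd : ∀ x (s : ℝ), HasDerivAt (fun s : ℝ => w (x + s • h)) (D (x + s • h)) s := by
    intro x s
    have := hder (x + s • h)
    rw [← sub_self s] at this
    have := this.comp_sub_const s s
    have e : ∀ r : ℝ, x + s • h + (r - s) • h = x + r • h := fun r => by
      rw [sub_smul]; abel
    simpa only [e] using this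
  have : ∀ x, ∫ s in (0:ℝ)..1, D (x + s • h) = w (x + h) - w x := by
    intro x
    rw [intervalIntegral.integral_eq_sub_of_hasDerivAt (fun s _ => hd x s)]
    · simp
    · apply Continuous.intervalIntegrable; fun_prop
  simp_rw [this]
  rw [integral_sub, int_trans hL hw, sub_self]
  · apply cont_int hL; fun_prop
  · apply cont_int hL; fun_prop

/-- A Poincare-type inequality for translations. -/
lemma poinc (hL : ∀ i, 0 < L i) {g : EuclideanSpace ℝ (Fin N) → ℝ} {g' : EuclideanSpace ℝ (Fin N) →
      EuclideanSpace ℝ (Fin N) →L[ℝ] ℝ}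
    (hd : ∀ x, HasFDerivAt g (g' x) x) (hc : Continuous g') (hp : Per L g')
    (h : EuclideanSpace ℝ (Fin N)) :
    ∫ x in Cell L, (g (x + h) - g x) ^ 2 ≤ ‖h‖ ^ 2 * ∫ x in Cell L, ‖g' x‖ ^ 2 := by
  have hgc : Continuous g := continuous_iff_continuousAt.2 fun x => (hd x).continuousAt
  have hP : Per L (fun x => ‖g' x‖ ^ 2) := fun x i => by show ‖g' _‖ ^ 2 = _; rw [hp]
  have hA := int_avg hL hP (by fun_prop) h
  rw [← hA.2, ← integral_const_mul]
  apply integral_mono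
  · apply cont_int hL; fun_prop
  · exact hA.1.const_mul _
  intro x
  have hder : ∀ s : ℝ, HasDerivAt (fun s : ℝ => g (x + s • h)) (g' (x + s • h) h) s := by
    intro s
    have h1 : HasDerivAt (fun s : ℝ => x + s • h) h s := by
      simpa using ((hasDerivAt_id s).smul_const h).const_add x
    exact (hd _).comp_hasDerivAt s h1
  have h1 : g (x + h) - g x = ∫ s in (0:ℝ)..1, g' (x + s • h) h := by
    rw [intervalIntegral.integral_eq_sub_of_hasDerivAt (fun s _ => hder s)]
    · simp
    · apply Continuous.intervalIntegrable; fun_prop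
  show (g (x + h) - g x) ^ 2 ≤ ‖h‖ ^ 2 * ∫ s in (0:ℝ)..1, ‖g' (x + s • h)‖ ^ 2
  set m := g (x + h) - g x with hm
  have h2 : ∫ s in (0:ℝ)..1, (2 * m * g' (x + s • h) h - m ^ 2) ≤
      ∫ s in (0:ℝ)..1, ‖h‖ ^ 2 * ‖g' (x + s • h)‖ ^ 2 := by
    apply intervalIntegral.integral_mono_on zero_le_one
    · apply Continuous.intervalIntegrable; fun_prop
    · apply Continuous.intervalIntegrable; fun_prop
    · intro s _
      have h3 := (g' (x + s • h)).le_opNorm h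
      have h4 : (g' (x + s • h) h) ^ 2 ≤ ‖h‖ ^ 2 * ‖g' (x + s • h)‖ ^ 2 := by
        rw [← mul_pow, ← sq_abs, mul_comm]
        exact pow_le_pow_left₀ (abs_nonneg _) h3 2
      nlinarith [sq_nonneg (m - g' (x + s • h) h)]
  rw [intervalIntegral.integral_sub, intervalIntegral.integral_const_mul,
    intervalIntegral.integral_const_mul, ← h1] at h2
  · simp at h2
    nlinarith
  · apply Continuous.intervalIntegrable; fun_prop
  · apply Continuous.intervalIntegrable; fun_prop

end

section
variable {N : ℕ}

lemma sq_max_deriv (s : ℝ) : HasDerivAt (fun s : ℝ => max s 0 ^ 2) (2 * max s 0) s := by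
  rcases lt_trichotomy s 0 with h | rfl | h
  · have : (fun s : ℝ => max s 0 ^ 2) =ᶠ[nhds s] fun _ => 0 := by
      filter_upwards [gt_mem_nhds h] with r hr
      simp [max_eq_right (le_of_lt hr)]
    rw [max_eq_right h.le, mul_zero]
    exact (hasDerivAt_const s (0:ℝ)).congr_of_eventuallyEq this
  · rw [max_self, mul_zero, hasDerivAt_iff_isLittleO_nhds_zero]
    have : (fun h : ℝ => h ^ 2) =o[nhds 0] fun h => h := by
      simpa using Asymptotics.isLittleO_pow_id (𝕜 := ℝ) (n := 2) (by norm_num)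
    refine Asymptotics.IsBigO.trans_isLittleO ?_ this
    refine Asymptotics.IsBigO.of_bound 1 (Eventually.of_forall fun r => ?_)
    simp only [zero_add, max_self, smul_zero, sub_zero, Real.norm_eq_abs, one_mul]
    rw [zero_pow two_ne_zero, sub_zero, abs_pow, abs_pow]
    refine pow_le_pow_left₀ (abs_nonneg _) ?_ 2
    rcases le_total r 0 with h | h
    · simp [max_eq_right h]
    · simp [max_eq_left h]
  · have : (fun s : ℝ => max s 0 ^ 2) =ᶠ[nhds s] fun s => s ^ 2 := by
      filter_upwards [lt_mem_nhds h] with r hr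
      simp [max_eq_left (le_of_lt hr)]
    rw [max_eq_left h.le]
    simpa using (hasDerivAt_pow 2 s).congr_of_eventuallyEq this

lemma grad_norm (φ : EuclideanSpace ℝ (Fin N) → ℝ) (x : EuclideanSpace ℝ (Fin N)) :
    ‖gradient φ x‖ = ‖fderiv ℝ φ x‖ := by
  simp [gradient]

lemma sum_sq (A : EuclideanSpace ℝ (Fin N) →L[ℝ] ℝ) :
    ∑ j, (A (EuclideanSpace.single j 1)) ^ 2 = ‖A‖ ^ 2 := by
  set y := (InnerProductSpace.toDual ℝ (EuclideanSpace ℝ (Fin N))).symm A with hy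
  have h1 : ∀ z, A z = ⟪y, z⟫ := fun z => by rw [hy, InnerProductSpace.toDual_symm_apply]
  have h2 : ‖A‖ = ‖y‖ := by simp [hy]
  rw [h2, EuclideanSpace.norm_sq_eq]
  refine Finset.sum_congr rfl fun j _ => ?_
  rw [h1, EuclideanSpace.inner_single_right]
  simp

lemma fd_contDiff {n : ℕ} {w : EuclideanSpace ℝ (Fin N) → ℝ} (hw : ContDiff ℝ (n + 1) w)
    (a : EuclideanSpace ℝ (Fin N)) : ContDiff ℝ n (fun y => fderiv ℝ w y a) :=
  (hw.fderiv_right le_rfl).clm_apply contDiff_const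

lemma fd_comm {w : EuclideanSpace ℝ (Fin N) → ℝ} (hw : ContDiff ℝ 2 w)
    (x a b : EuclideanSpace ℝ (Fin N)) :
    fderiv ℝ (fun y => fderiv ℝ w y a) x b = fderiv ℝ (fun y => fderiv ℝ w y b) x a := by
  have hd : DifferentiableAt ℝ (fderiv ℝ w) x :=
    (hw.fderiv_right (m := 1) (by norm_num)).differentiable (by norm_num) x
  have hs := (hw.contDiffAt (x := x)).isSymmSndFDerivAt (by simp)
  have e : ∀ c d, fderiv ℝ (fun y => fderiv ℝ w y c) x d = fderiv ℝ (fderiv ℝ w) x d c := by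
    intro c d
    rw [fderiv_clm_apply hd (differentiableAt_const c)]
    simp
  rw [e, e]; exact hs b a

/-- The linearized equation for a directional derivative. -/
lemma lin_eq {f : ℝ → ℝ} (hf : ContDiff ℝ 1 f) {u : EuclideanSpace ℝ (Fin N) → ℝ}
    (hu : ContDiff ℝ 3 u) (hpde : ∀ x, Lap u x + f (u x) = 0)
    (a x : EuclideanSpace ℝ (Fin N)) :
    Lap (fun y => fderiv ℝ u y a) x + deriv f (u x) * fderiv ℝ u x a = 0 := by
  have hu2 : ContDiff ℝ 2 u := hu.of_le (by norm_num)
  have h1 : ∀ b, ContDiff ℝ 2 (fun y => fderiv ℝ u y b) := fun b => fd_contDiff (n := 2) (by exact_mod_cast hu) b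
  have h2 : ∀ b c, ContDiff ℝ 1 (fun z => fderiv ℝ (fun y => fderiv ℝ u y b) z c) := fun b c =>
    fd_contDiff (n := 1) (by exact_mod_cast h1 b) c
  have h0 : fderiv ℝ (fun x => Lap u x + f (u x)) x a = 0 := by
    have : (fun x => Lap u x + f (u x)) = fun _ => 0 := funext hpde
    rw [this]; simp
  have hfd : DifferentiableAt ℝ f (u x) := hf.differentiable (by norm_num) _
  have hud : DifferentiableAt ℝ u x := hu.differentiable (by norm_num) _
  have hfu : HasFDerivAt (fun x => f (u x)) (deriv f (u x) • fderiv ℝ u x) x :=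
    hfd.hasDerivAt.comp_hasFDerivAt x hud.hasFDerivAt
  have hlap : HasFDerivAt (fun x => Lap u x)
      (∑ j : Fin N, fderiv ℝ (fun z => fderiv ℝ (fun y => fderiv ℝ u y (EuclideanSpace.single j 1))
        z (EuclideanSpace.single j 1)) x) x := by
    unfold Lap Hess
    exact HasFDerivAt.fun_sum fun j _ =>
      ((h2 _ _).differentiable (by norm_num) x).hasFDerivAt
  rw [(hlap.fun_add hfu).fderiv] at h0
  rw [← h0]
  simp only [add_apply, sum_apply,
    smul_apply, smul_eq_mul, add_left_inj, Lap, Hess]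
  refine Finset.sum_congr rfl fun j _ => ?_
  rw [fd_comm (h1 (EuclideanSpace.single j 1)) x (EuclideanSpace.single j 1) a]
  have : (fun z => fderiv ℝ (fun y => fderiv ℝ u y a) z (EuclideanSpace.single j 1)) =
      fun z => fderiv ℝ (fun y => fderiv ℝ u y (EuclideanSpace.single j 1)) z a :=
    funext fun z => fd_comm hu2 z a _
  rw [this]

lemma Per.fderiv {L : Fin N → ℝ} {w : EuclideanSpace ℝ (Fin N) → ℝ} (hw : Per L w) :
    Per L (fderiv ℝ w) := by
  intro x i
  rw [← fderiv_comp_add_right]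
  congr 1
  ext y
  exact hw y i

lemma sign_change {L : Fin N → ℝ} (hL : ∀ i, 0 < L i) {u : EuclideanSpace ℝ (Fin N) → ℝ}
    (hu : Differentiable ℝ u) (hper : Per L u) (i : Fin N)
    (h : ∀ x, 0 ≤ fderiv ℝ u x (EuclideanSpace.single i 1)) (x : EuclideanSpace ℝ (Fin N)) :
    fderiv ℝ u x (EuclideanSpace.single i 1) = 0 := by
  set e : EuclideanSpace ℝ (Fin N) := EuclideanSpace.single i 1
  have hder : ∀ s : ℝ, HasDerivAt (fun s : ℝ => u (x + s • e)) (fderiv ℝ u (x + s • e) e) s := by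
    intro s
    have h1 : HasDerivAt (fun s : ℝ => x + s • e) e s := by
      simpa using ((hasDerivAt_id s).smul_const e).const_add x
    exact (hu _).hasFDerivAt.comp_hasDerivAt s h1
  have hmono : Monotone (fun s : ℝ => u (x + s • e)) := by
    apply monotone_of_deriv_nonneg (fun s => (hder s).differentiableAt)
    intro s; rw [(hder s).deriv]; exact h _
  have hp : ∀ s : ℝ, u (x + (s + L i) • e) = u (x + s • e) := by
    intro s; rw [add_smul, ← add_assoc]; exact hper _ i
  have hconst : (fun s : ℝ => u (x + s • e)) =ᶠ[nhds 0] fun _ => u x := by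
    have : Set.Ioo (-L i) (L i) ∈ nhds (0:ℝ) := Ioo_mem_nhds (by linarith [hL i]) (hL i)
    filter_upwards [this] with s hs
    have a1 := hmono hs.1.le
    have a2 := hmono hs.2.le
    have a3 := hp 0
    have a4 := hp (-L i)
    simp only [zero_add, neg_add_cancel, zero_smul, add_zero] at a1 a2 a3 a4
    linarith
  have h5 := (hder 0).unique ((hasDerivAt_const (0:ℝ) (u x)).congr_of_eventuallyEq hconst)
  simpa using h5

end

section
variable {N : ℕ} {L : Fin N → ℝ} (hL : ∀ i, 0 < L i)
  {v c : EuclideanSpace ℝ (Fin N) → ℝ} (hv : ContDiff ℝ 2 v) (hvp : Per L v)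
  (hc : Continuous c) (heq : ∀ x, Lap v x + c x * v x = 0)

lemma v_cont (hv : ContDiff ℝ 2 v) : Continuous v := hv.continuous

lemma dv_cont (hv : ContDiff ℝ 2 v) : Continuous (fderiv ℝ v) := hv.continuous_fderiv (by norm_num)

lemma v_fd (hv : ContDiff ℝ 2 v) (x : EuclideanSpace ℝ (Fin N)) : HasFDerivAt v (fderiv ℝ v x) x :=
  (hv.differentiable (by norm_num) x).hasFDerivAt

lemma ibp (hL : ∀ i, 0 < L i) (hv : ContDiff ℝ 2 v) (hvp : Per L v) (heq : ∀ x, Lap v x + c x * v x = 0) {H H' : ℝ → ℝ} (hH : ∀ s, HasDerivAt H (H' s) s) (hH' : Continuous H') :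
    ∫ x in Cell L, (H' (v x) * ‖fderiv ℝ v x‖ ^ 2 - c x * v x * H (v x)) = 0 := by
  have hHc : Continuous H := continuous_iff_continuousAt.2 fun x => (hH x).continuousAt
  have hvc := v_cont hv
  have hdc := dv_cont hv
  have h1 : ∀ b, ContDiff ℝ 1 (fun y => fderiv ℝ v y b) := fun b =>
    fd_contDiff (n := 1) (by exact_mod_cast hv) b
  have h2 : ∀ b d, Continuous (fun x => Hess v x b d) := fun b d => by
    unfold Hess
    exact ((h1 b).continuous_fderiv (by norm_num)).clm_apply continuous_const
  have hp1 := hvp.fderiv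
  have hp2 : ∀ b d, Per L (fun x => Hess v x b d) := fun b d => by
    have : Per L (fun y => fderiv ℝ v y b) := fun x i => by
      show fderiv ℝ v _ b = _; rw [hp1]
    intro x i
    show fderiv ℝ (fun y => fderiv ℝ v y b) _ d = _
    rw [this.fderiv]; rfl
  let D : Fin N → EuclideanSpace ℝ (Fin N) → ℝ := fun j x =>
    H' (v x) * (fderiv ℝ v x (EuclideanSpace.single j 1)) ^ 2 +
      H (v x) * Hess v x (EuclideanSpace.single j 1) (EuclideanSpace.single j 1)
  have hDc : ∀ j, Continuous (D j) := fun j => by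
    have := h2 (EuclideanSpace.single j 1) (EuclideanSpace.single j 1)
    fun_prop
  have hD : ∀ j, ∫ x in Cell L, D j x = 0 := by
    intro j
    refine int_deriv hL (w := fun x => H (v x) * fderiv ℝ v x (EuclideanSpace.single j 1))
      ?_ ?_ (by fun_prop) (hDc j) (EuclideanSpace.single j 1) ?_
    · intro x i
      show H (v _) * fderiv ℝ v _ _ = _
      rw [hvp, hp1]
    · intro x i
      show H' (v _) * _ + H (v _) * Hess v _ _ _ = _
      rw [hvp, hp1]
      have := hp2 (EuclideanSpace.single j 1) (EuclideanSpace.single j 1) x i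
      beta_reduce at this
      rw [this]
    · intro x
      set e : EuclideanSpace ℝ (Fin N) := EuclideanSpace.single j 1
      have l1 : HasDerivAt (fun s : ℝ => x + s • e) e 0 := by
        simpa using ((hasDerivAt_id (0:ℝ)).smul_const e).const_add x
      have l2 : HasDerivAt (fun s : ℝ => v (x + s • e)) (fderiv ℝ v x e) 0 := by
        have := v_fd hv (x + (0:ℝ) • e)
        have := this.comp_hasDerivAt (0:ℝ) l1
        simpa [Function.comp_def] using this
      have l3 : HasDerivAt (fun s : ℝ => fderiv ℝ v (x + s • e) e) (Hess v x e e) 0 := by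
        have := ((h1 e).differentiable (by norm_num) (x + (0:ℝ) • e)).hasFDerivAt
        have := this.comp_hasDerivAt (0:ℝ) l1
        simpa [Hess, Function.comp_def] using this
      have l4 : HasDerivAt (fun s : ℝ => H (v (x + s • e))) (H' (v x) * fderiv ℝ v x e) 0 := by
        have := (hH (v (x + (0:ℝ) • e))).comp (0:ℝ) l2
        simpa [Function.comp_def] using this
      have := l4.fun_mul l3
      simp only [zero_smul, add_zero] at this
      have e2 : D j x = H' (v x) * fderiv ℝ v x e * fderiv ℝ v x e + H (v x) * Hess v x e e := by
        simp only [D]; ring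
      rw [e2]; exact this
  have hsum : ∫ x in Cell L, ∑ j, D j x = 0 := by
    rw [integral_finsetSum _ fun j _ => cont_int hL (hDc j)]
    exact Finset.sum_eq_zero fun j _ => hD j
  rw [← hsum]
  congr 1
  ext x
  simp only [D]
  rw [Finset.sum_add_distrib, ← Finset.mul_sum, ← Finset.mul_sum, sum_sq]
  have : ∑ j, Hess v x (EuclideanSpace.single j 1) (EuclideanSpace.single j 1) = - (c x * v x) := by
    have := heq x
    unfold Lap at this
    linarith
  rw [this]; ring

/-- The regularized positive part. -/
noncomputable def HH (d s : ℝ) : ℝ := s * max s 0 ^ 2 / (s ^ 2 + d)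

/-- Its derivative. -/
noncomputable def HH' (d s : ℝ) : ℝ :=
  ((max s 0 ^ 2 + s * (2 * max s 0)) * (s ^ 2 + d) - s * max s 0 ^ 2 * (2 * s)) / (s ^ 2 + d) ^ 2

lemma HH_deriv {d : ℝ} (hd : 0 < d) (s : ℝ) : HasDerivAt (HH d) (HH' d s) s := by
  have h1 := (hasDerivAt_id s).fun_mul (sq_max_deriv s)
  have h2 : HasDerivAt (fun s : ℝ => s ^ 2 + d) (2 * s) s := by
    simpa using (hasDerivAt_pow 2 s).add_const d
  have := h1.fun_div h2 (by positivity)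
  simp only [id, one_mul] at this
  exact this

lemma HH'_cont {d : ℝ} (hd : 0 < d) : Continuous (HH' d) := by
  unfold HH'
  apply Continuous.div (by fun_prop) (by fun_prop)
  intro x; positivity

lemma HH_nonpos {d s : ℝ} (hs : s ≤ 0) : HH d s = 0 ∧ HH' d s = 0 := by
  simp [HH, HH', max_eq_right hs]

lemma HH_bound {d : ℝ} (hd : 0 < d) (s : ℝ) : |HH d s| ≤ |s| ∧ |HH' d s| ≤ 3 := by
  rcases le_total s 0 with h | h
  · simp [HH_nonpos h]
  · rw [HH, HH', max_eq_left h]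
    constructor
    · rw [abs_div, abs_of_pos (show 0 < s ^ 2 + d by positivity), div_le_iff₀ (by positivity),
        abs_mul, abs_of_nonneg (sq_nonneg s)]
      gcongr; linarith
    · rw [abs_div, abs_of_pos (show 0 < (s ^ 2 + d) ^ 2 by positivity), div_le_iff₀ (by positivity)]
      rw [abs_of_nonneg]
      · nlinarith [sq_nonneg d, sq_nonneg (s^2), mul_nonneg hd.le (sq_nonneg s)]
      · nlinarith [sq_nonneg d, sq_nonneg (s^2), mul_nonneg hd.le (sq_nonneg s)]

lemma HH_lim {s : ℝ} (hs : 0 < s) :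
    Tendsto (fun n : ℕ => HH (1 / ((n:ℝ) + 1)) s) atTop (nhds s) ∧
    Tendsto (fun n : ℕ => HH' (1 / ((n:ℝ) + 1)) s) atTop (nhds 1) := by
  have h0 := tendsto_one_div_add_atTop_nhds_zero_nat (𝕜 := ℝ)
  have hs2 : s ^ 2 + 0 ≠ 0 := by positivity
  constructor
  · have : ContinuousAt (fun d => HH d s) 0 := by
      unfold HH
      exact ContinuousAt.div (by fun_prop) (by fun_prop) hs2
    have h := this.tendsto.comp h0
    have e : HH 0 s = s := by
      rw [HH, max_eq_left hs.le]; field_simp; ring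
    rw [e] at h
    exact h
  · have : ContinuousAt (fun d => HH' d s) 0 := by
      unfold HH'
      exact ContinuousAt.div (by fun_prop) (by fun_prop) (pow_ne_zero 2 hs2)
    have h := this.tendsto.comp h0
    have e : HH' 0 s = 1 := by
      rw [HH', max_eq_left hs.le]; field_simp; ring
    rw [e] at h
    exact h

lemma pos_part_null (hL : ∀ i, 0 < L i) (hv : ContDiff ℝ 2 v) (hvp : Per L v) (hc : Continuous c) (heq : ∀ x, Lap v x + c x * v x = 0) :
    ∫ x in Cell L, ({x | 0 < v x}.indicator (fun x => ‖fderiv ℝ v x‖ ^ 2) x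
      - c x * max (v x) 0 ^ 2) = 0 := by
  have hvc := v_cont hv
  have hdc := dv_cont hv
  have hpos : ∀ n : ℕ, 0 < 1 / ((n:ℝ) + 1) := fun n => by positivity
  have hz := fun n : ℕ => ibp hL hv hvp heq (HH_deriv (hpos n)) (HH'_cont (hpos n))
  have hHc : ∀ n : ℕ, Continuous (HH (1 / ((n:ℝ) + 1))) := fun n =>
    continuous_iff_continuousAt.2 fun x => (HH_deriv (hpos n) x).continuousAt
  have key := tendsto_integral_of_dominated_convergence (μ := volume.restrict (Cell L))
    (F := fun (n : ℕ) x => HH' (1 / ((n:ℝ) + 1)) (v x) * ‖fderiv ℝ v x‖ ^ 2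
      - c x * v x * HH (1 / ((n:ℝ) + 1)) (v x))
    (f := fun x => {x | 0 < v x}.indicator (fun x => ‖fderiv ℝ v x‖ ^ 2) x
      - c x * max (v x) 0 ^ 2)
    (fun x => 3 * ‖fderiv ℝ v x‖ ^ 2 + |c x| * |v x| * |v x|)
    (fun n => by
      have := HH'_cont (hpos n)
      have := hHc n
      apply Continuous.aestronglyMeasurable
      fun_prop)
    (cont_int hL (by fun_prop))
    (fun n => Eventually.of_forall fun x => by
      have := HH_bound (hpos n) (v x)
      refine (norm_sub_le _ _).trans ?_
      simp only [norm_mul, norm_pow, Real.norm_eq_abs, abs_norm]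
      exact add_le_add (mul_le_mul_of_nonneg_right this.2 (by positivity))
        (mul_le_mul_of_nonneg_left this.1 (by positivity)))
    (Eventually.of_forall fun x => by
      by_cases h : 0 < v x
      · have := HH_lim h
        rw [Set.indicator_of_mem (by exact h), max_eq_left h.le]
        have := (this.2.mul_const (‖fderiv ℝ v x‖ ^ 2)).sub (this.1.const_mul (c x * v x))
        rw [one_mul, mul_assoc (c x), ← sq] at this
        exact this
      · rw [Set.indicator_of_notMem (by exact h), max_eq_right (not_lt.1 h)]
        simp [HH_nonpos (not_lt.1 h)])
  simp_rw [hz] at key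
  exact tendsto_nhds_unique key tendsto_const_nhds

end

section
variable {N : ℕ} {L : Fin N → ℝ} (hL : ∀ i, 0 < L i)
  {v c : EuclideanSpace ℝ (Fin N) → ℝ} (hv : ContDiff ℝ 2 v) (hvp : Per L v)
  (hc : Continuous c) (heq : ∀ x, Lap v x + c x * v x = 0)

/-- The test profile. -/
noncomputable def GG (t ε s : ℝ) : ℝ := max s 0 + t / (max s 0 + ε)

lemma GG_lip {t ε : ℝ} (ht : 0 < t) (hε : 0 < ε) : ∃ K : NNReal, LipschitzWith K (GG t ε) := by
  refine ⟨⟨1 + t / ε ^ 2, by positivity⟩, LipschitzWith.of_dist_le_mul fun s r => ?_⟩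
  have key : |max s 0 - max r 0| ≤ |s - r| := abs_max_sub_max_le_abs s r 0
  have hs := le_max_right s 0
  have hr := le_max_right r 0
  rw [Real.dist_eq, Real.dist_eq]
  show _ ≤ (1 + t / ε ^ 2) * _
  unfold GG
  generalize max s 0 = a at *
  generalize max r 0 = b at *
  have e : a + t / (a + ε) - (b + t / (b + ε)) = (a - b) * (1 - t / ((a + ε) * (b + ε))) := by
    field_simp; ring
  rw [e, abs_mul, mul_comm]
  refine mul_le_mul ?_ key (abs_nonneg _) (by positivity)
  have h1 : 0 ≤ t / ((a + ε) * (b + ε)) := by positivity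
  have h2 : t / ((a + ε) * (b + ε)) ≤ t / ε ^ 2 := by
    gcongr
    nlinarith
  rw [abs_le]; constructor <;> linarith

lemma GG_grad (hv : ContDiff ℝ 2 v) {t ε : ℝ} (ht : 0 < t) (hε : 0 < ε) (hte : t < ε ^ 2)
    (x : EuclideanSpace ℝ (Fin N)) :
    ‖gradient (fun x => GG t ε (v x)) x‖ ^ 2 = {x | 0 < v x}.indicator
      (fun x => (1 - t / (max (v x) 0 + ε) ^ 2) ^ 2 * ‖fderiv ℝ v x‖ ^ 2) x := by
  rw [grad_norm]
  by_cases h : 0 < v x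
  · rw [Set.indicator_of_mem (by exact h), max_eq_left h.le]
    have h1 : HasDerivAt (fun s : ℝ => s + t / (s + ε)) (1 - t / (v x + ε) ^ 2) (v x) := by
      have a1 := (hasDerivAt_id (v x)).add_const ε
      have a2 := (hasDerivAt_const (v x) t).fun_div a1 (by simp only [id]; positivity)
      have a3 := (hasDerivAt_id (v x)).fun_add a2
      simp only [id] at a3
      have e : 1 - t / (v x + ε) ^ 2 = 1 + (0 * (v x + ε) - t * 1) / (v x + ε) ^ 2 := by ring
      rw [e]; exact a3
    have h2 : (fun s : ℝ => GG t ε s) =ᶠ[nhds (v x)] fun s : ℝ => s + t / (s + ε) := by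
      filter_upwards [lt_mem_nhds h] with r hr
      simp [GG, max_eq_left (le_of_lt hr)]
    have h3 := (h1.congr_of_eventuallyEq h2).comp_hasFDerivAt x (v_fd hv x)
    have h4 : fderiv ℝ (fun x => GG t ε (v x)) x = _ := h3.fderiv
    rw [h4, norm_smul, mul_pow, Real.norm_eq_abs, sq_abs]
  · rw [Set.indicator_of_notMem (by exact h)]
    have : IsLocalMin (fun x => GG t ε (v x)) x := by
      refine Eventually.of_forall fun y => ?_
      simp only [GG]
      rw [max_eq_right (not_lt.1 h), zero_add, zero_add]
      have hr := le_max_right (v y) 0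
      generalize max (v y) 0 = r at *
      have e : r + t / (r + ε) - t / ε = r * (1 - t / (ε * (r + ε))) := by field_simp; ring
      have h5 : t / (ε * (r + ε)) ≤ 1 := by
        rw [div_le_one (by positivity)]; nlinarith
      have : 0 ≤ r * (1 - t / (ε * (r + ε))) := mul_nonneg hr (by linarith)
      linarith
    rw [this.fderiv_eq_zero]; simp

lemma energy_bound (hL : ∀ i, 0 < L i) (hv : ContDiff ℝ 2 v) (hvp : Per L v) (hc : Continuous c) (heq : ∀ x, Lap v x + c x * v x = 0)
    (hstab : ∀ φ : EuclideanSpace ℝ (Fin N) → ℝ, (∃ K : NNReal, LipschitzWith K φ) → Per L φ →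
      0 ≤ ∫ x in Cell L, (‖gradient φ x‖ ^ 2 - c x * φ x ^ 2)) {ε : ℝ} (hε : 0 < ε) :
    ∫ x in Cell L, {x | 0 < v x}.indicator (fun x => ‖fderiv ℝ v x‖ ^ 2 / (max (v x) 0 + ε) ^ 2) x
      ≤ ∫ x in Cell L, |c x| := by
  have hvc := v_cont hv
  have hdc := dv_cont hv
  have hS : MeasurableSet {x | 0 < v x} := (isOpen_lt continuous_const hvc).measurableSet
  have hpe : ∀ x, 0 < max (v x) 0 + ε := fun x => by have := le_max_right (v x) 0; linarith
  have hpe' : ∀ x, max (v x) 0 + ε ≠ 0 := fun x => (hpe x).ne'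
  have hpe2 : ∀ n x, (max (v x) 0 + ε) ^ n ≠ 0 := fun n x => pow_ne_zero n (hpe' x)
  have hvl : ∃ K : NNReal, LipschitzWith K v := by
    have hP : Per L (fun x => ‖fderiv ℝ v x‖) := fun x i => by
      show ‖fderiv ℝ v _‖ = _; rw [hvp.fderiv]
    obtain ⟨C, hC0, hC⟩ := per_bdd hL hP (by fun_prop)
    refine ⟨⟨C, hC0⟩, lipschitzWith_of_nnnorm_fderiv_le (𝕜 := ℝ) (hv.differentiable (by norm_num)) fun x => ?_⟩
    have := hC x
    rw [abs_norm] at this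
    exact this
  obtain ⟨Kv, hKv⟩ := hvl
  set P : EuclideanSpace ℝ (Fin N) → ℝ := fun x => ‖fderiv ℝ v x‖ ^ 2 with hPdef
  have hPc : Continuous P := by fun_prop
  let A : EuclideanSpace ℝ (Fin N) → ℝ := fun x =>
    {x | 0 < v x}.indicator P x - c x * max (v x) 0 ^ 2
  let B1 : EuclideanSpace ℝ (Fin N) → ℝ := fun x =>
    {x | 0 < v x}.indicator (fun x => P x / (max (v x) 0 + ε) ^ 2) x
  let B2 : EuclideanSpace ℝ (Fin N) → ℝ := fun x => c x * (max (v x) 0 / (max (v x) 0 + ε))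
  let K : EuclideanSpace ℝ (Fin N) → ℝ := fun x =>
    {x | 0 < v x}.indicator (fun x => P x / (max (v x) 0 + ε) ^ 4) x -
      c x / (max (v x) 0 + ε) ^ 2
  have iA : IntegrableOn A (Cell L) :=
    ((cont_int hL hPc).indicator hS).sub (cont_int hL (by fun_prop))
  have cB1 : Continuous (fun x => P x / (max (v x) 0 + ε) ^ 2) :=
    hPc.div (by fun_prop) (hpe2 2)
  have iB1 : IntegrableOn B1 (Cell L) := (cont_int hL cB1).indicator hS
  have cB2 : Continuous B2 := hc.mul (Continuous.div (by fun_prop) (by fun_prop) hpe')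
  have iB2 : IntegrableOn B2 (Cell L) := cont_int hL cB2
  have cK1 : Continuous (fun x => P x / (max (v x) 0 + ε) ^ 4) :=
    hPc.div (by fun_prop) (hpe2 4)
  have cK2 : Continuous (fun x => c x / (max (v x) 0 + ε) ^ 2) :=
    hc.div (by fun_prop) (hpe2 2)
  have iK : IntegrableOn K (Cell L) :=
    ((cont_int hL cK1).indicator hS).sub (cont_int hL cK2)
  have hA0 : ∫ x in Cell L, A x = 0 := pos_part_null hL hv hvp hc heq
  have main : ∀ t, 0 < t → t < ε ^ 2 →
      0 ≤ -2 * t * ((∫ x in Cell L, B1 x) + ∫ x in Cell L, B2 x) + t ^ 2 * ∫ x in Cell L, K x := by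
    intro t ht hte
    obtain ⟨KG, hKG⟩ := GG_lip ht hε
    have h1 := hstab (fun x => GG t ε (v x)) ⟨KG * Kv, hKG.comp hKv⟩
      (fun x i => by show GG t ε (v _) = _; rw [hvp])
    have h2 : ∀ x, ‖gradient (fun x => GG t ε (v x)) x‖ ^ 2 - c x * GG t ε (v x) ^ 2 =
        A x + (-2 * t * (B1 x + B2 x) + t ^ 2 * K x) := by
      intro x
      rw [GG_grad hv ht hε hte]
      simp only [A, B1, B2, K, GG]
      have := hpe' x
      by_cases h : 0 < v x
      · have hm : x ∈ {x | 0 < v x} := h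
        simp only [Set.indicator_of_mem hm]
        field_simp
        simp only [hPdef]
        ring
      · have hm : x ∉ {x | 0 < v x} := h
        simp only [Set.indicator_of_notMem hm]
        field_simp
        ring
    simp_rw [h2] at h1
    have e1 : ∫ x in Cell L, (A x + (-2 * t * (B1 x + B2 x) + t ^ 2 * K x)) =
        (∫ x in Cell L, A x) + (-2 * t * ((∫ x in Cell L, B1 x) + ∫ x in Cell L, B2 x)
          + t ^ 2 * ∫ x in Cell L, K x) := by
      rw [integral_add iA, integral_add, integral_const_mul, integral_const_mul, integral_add iB1 iB2]
      · exact (iB1.add iB2).const_mul _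
      · exact iK.const_mul _
      · exact ((iB1.add iB2).const_mul _).add (iK.const_mul _)
    rw [e1, hA0, zero_add] at h1
    exact h1
  have hB : (∫ x in Cell L, B1 x) + ∫ x in Cell L, B2 x ≤ 0 := by
    by_contra hcon
    push Not at hcon
    set b := (∫ x in Cell L, B1 x) + ∫ x in Cell L, B2 x
    set k := ∫ x in Cell L, K x
    set t := min (ε ^ 2 / 2) (b / (|k| + 1))
    have hk : 0 < |k| + 1 := by positivity
    have ht0 : 0 < t := lt_min (by positivity) (by positivity)
    have ht1 : t < ε ^ 2 := (min_le_left _ _).trans_lt (half_lt_self (by positivity))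
    have ht2 : t * (|k| + 1) ≤ b := by
      rw [← le_div_iff₀ hk]; exact min_le_right _ _
    have hm := main t ht0 ht1
    have hk2 := le_abs_self k
    have h3 : t * k ≤ b := by nlinarith
    have : 0 ≤ t * (-2 * b + t * k) := by linarith [hm]
    have : 0 ≤ -2 * b + t * k := nonneg_of_mul_nonneg_right this ht0
    linarith
  have hB2 : -∫ x in Cell L, B2 x ≤ ∫ x in Cell L, |c x| := by
    rw [← integral_neg]
    apply integral_mono iB2.neg (cont_int hL (by fun_prop))
    intro x
    show -(c x * (max (v x) 0 / (max (v x) 0 + ε))) ≤ |c x|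
    have hq0 : 0 ≤ max (v x) 0 / (max (v x) 0 + ε) := div_nonneg (le_max_right _ _) (hpe x).le
    have hq1 : max (v x) 0 / (max (v x) 0 + ε) ≤ 1 := by
      rw [div_le_one (hpe x)]; linarith
    have := neg_abs_le (c x)
    nlinarith [abs_nonneg (c x)]
  show ∫ x in Cell L, B1 x ≤ _
  linarith

/-- A logarithmic profile. -/
noncomputable def LG (ε s : ℝ) : ℝ := Real.log (1 + max s 0 ^ 2 / ε ^ 2)

/-- Its derivative. -/
noncomputable def LG' (ε s : ℝ) : ℝ := (2 * max s 0 / ε ^ 2) / (1 + max s 0 ^ 2 / ε ^ 2)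

lemma LG_deriv (ε s : ℝ) : HasDerivAt (LG ε) (LG' ε s) s :=
  (((sq_max_deriv s).div_const (ε ^ 2)).const_add 1).log (by positivity)

lemma LG'_cont (ε : ℝ) : Continuous (LG' ε) := by
  unfold LG'
  apply Continuous.div (by fun_prop) (by fun_prop)
  intro x; positivity

lemma log_bound (hL : ∀ i, 0 < L i) (hv : ContDiff ℝ 2 v) (hvp : Per L v) (hc : Continuous c) (heq : ∀ x, Lap v x + c x * v x = 0)
    (hstab : ∀ φ : EuclideanSpace ℝ (Fin N) → ℝ, (∃ K : NNReal, LipschitzWith K φ) → Per L φ →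
      0 ≤ ∫ x in Cell L, (‖gradient φ x‖ ^ 2 - c x * φ x ^ 2)) {ε : ℝ} (hε : 0 < ε)
    (h : EuclideanSpace ℝ (Fin N)) :
    ∫ x in Cell L, (LG ε (v (x + h)) - LG ε (v x)) ^ 2
      ≤ ‖h‖ ^ 2 * (16 * ∫ x in Cell L, |c x|) := by
  have hvc := v_cont hv
  have hdc := dv_cont hv
  have hS : MeasurableSet {x | 0 < v x} := (isOpen_lt continuous_const hvc).measurableSet
  have hpe : ∀ x, 0 < max (v x) 0 + ε := fun x => by have := le_max_right (v x) 0; linarith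
  have hLc := LG'_cont ε
  refine (poinc hL (g := fun x => LG ε (v x)) (g' := fun x => LG' ε (v x) • fderiv ℝ v x)
    (fun x => (LG_deriv ε (v x)).comp_hasFDerivAt x (v_fd hv x)) (by fun_prop)
    (fun x i => by show LG' ε (v _) • fderiv ℝ v _ = _; rw [hvp, hvp.fderiv]) h).trans ?_
  refine mul_le_mul_of_nonneg_left ?_ (by positivity)
  refine le_trans ?_ (mul_le_mul_of_nonneg_left (energy_bound hL hv hvp hc heq hstab hε) (by norm_num))
  rw [← integral_const_mul]
  have cB1 : Continuous (fun x => ‖fderiv ℝ v x‖ ^ 2 / (max (v x) 0 + ε) ^ 2) :=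
    Continuous.div (by fun_prop) (by fun_prop) fun x => pow_ne_zero 2 (hpe x).ne'
  apply integral_mono
  · exact cont_int hL (by fun_prop)
  · exact ((cont_int hL cB1).indicator hS).const_mul _
  intro x
  show ‖LG' ε (v x) • fderiv ℝ v x‖ ^ 2 ≤ 16 * _
  by_cases hx : 0 < v x
  · rw [Set.indicator_of_mem (by exact hx), norm_smul, mul_pow, Real.norm_eq_abs, sq_abs, LG',
      max_eq_left hx.le]
    have e : (2 * v x / ε ^ 2) / (1 + v x ^ 2 / ε ^ 2) ≤ 4 / (v x + ε) := by
      have : (2 * v x / ε ^ 2) / (1 + v x ^ 2 / ε ^ 2) = 2 * v x / (ε ^ 2 + v x ^ 2) := by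
        field_simp
      rw [this, div_le_div_iff₀ (by positivity) (by positivity)]
      nlinarith [sq_nonneg (v x - ε)]
    calc _ ≤ (4 / (v x + ε)) ^ 2 * ‖fderiv ℝ v x‖ ^ 2 := by
          gcongr
      _ = _ := by rw [div_pow]; ring
  · rw [Set.indicator_of_notMem (by exact hx), LG', max_eq_right (not_lt.1 hx)]
    simp

lemma contra (hL : ∀ i, 0 < L i) (hv : ContDiff ℝ 2 v) (hvp : Per L v) (hc : Continuous c) (heq : ∀ x, Lap v x + c x * v x = 0)
    (hstab : ∀ φ : EuclideanSpace ℝ (Fin N) → ℝ, (∃ K : NNReal, LipschitzWith K φ) → Per L φ →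
      0 ≤ ∫ x in Cell L, (‖gradient φ x‖ ^ 2 - c x * φ x ^ 2))
    {a b : EuclideanSpace ℝ (Fin N)} (ha : v a < 0) (hb : 0 < v b) : False := by
  have hvc := v_cont hv
  set h := b - a with hh
  let ctr : EuclideanSpace ℝ (Fin N) := WithLp.toLp 2 (fun i => L i / 2)
  set z := a - ctr with hz
  set m := v b / 2 with hm
  have hm0 : 0 < m := by positivity
  let W : Set (EuclideanSpace ℝ (Fin N)) :=
    (⋂ i, {x | 0 < x i ∧ x i < L i}) ∩ {x | v (x + z) < 0} ∩ {x | m < v (x + z + h)}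
  have hWo : IsOpen W := by
    refine IsOpen.inter (IsOpen.inter (isOpen_iInter_of_finite fun i => ?_) ?_) ?_
    · have hi : Continuous fun x : EuclideanSpace ℝ (Fin N) => x i := by fun_prop
      exact (isOpen_lt continuous_const hi).inter (isOpen_lt hi continuous_const)
    · exact isOpen_lt (by fun_prop) (by fun_prop)
    · exact isOpen_lt (by fun_prop) (by fun_prop)
  have hWn : W.Nonempty := by
    refine ⟨ctr, ⟨Set.mem_iInter.2 fun i => ?_, ?_⟩, ?_⟩
    · show 0 < L i / 2 ∧ L i / 2 < L i
      constructor <;> linarith [hL i]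
    · show v (ctr + (a - ctr)) < 0
      rw [add_sub_cancel]; exact ha
    · show m < v (ctr + (a - ctr) + (b - a))
      rw [add_sub_cancel, add_sub_cancel]; linarith
  have hWC : W ⊆ Cell L := fun x hx i => by
    have := Set.mem_iInter.1 hx.1.1 i
    exact ⟨this.1.le, this.2⟩
  have hWf : volume W ≠ ⊤ := (lt_of_le_of_lt (measure_mono hWC) (cell_fin hL)).ne
  have hWp : 0 < (volume W).toReal := ENNReal.toReal_pos (hWo.measure_pos volume hWn).ne' hWf
  set ω := (volume W).toReal
  set M := ‖h‖ ^ 2 * (16 * ∫ x in Cell L, |c x|) with hM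
  have hM0 : 0 ≤ M := by
    have : 0 ≤ ∫ x in Cell L, |c x| := integral_nonneg fun x => abs_nonneg _
    positivity
  have hR : ∀ R : ℝ, 0 ≤ R → ω * R ^ 2 ≤ M := by
    intro R hR0
    set ε := m * Real.exp (-R) with hεd
    have hε : 0 < ε := by positivity
    have hLGc : Continuous (LG ε) := continuous_iff_continuousAt.2 fun x => (LG_deriv ε x).continuousAt
    have h1 := log_bound hL hv hvp hc heq hstab hε h
    have hper : Per L (fun x => (LG ε (v (x + h)) - LG ε (v x)) ^ 2) := by
      intro x i
      show (LG ε (v (_ + _ + h)) - LG ε (v _)) ^ 2 = _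
      rw [add_right_comm, hvp, hvp]
    rw [← int_trans hL hper z] at h1
    refine le_trans ?_ h1
    have hcont : Continuous (fun x => (LG ε (v (x + z + h)) - LG ε (v (x + z))) ^ 2) := by fun_prop
    have hint := cont_int hL hcont
    calc ω * R ^ 2 = ∫ x in W, R ^ 2 := by
          rw [setIntegral_const]; rfl
      _ ≤ ∫ x in W, (LG ε (v (x + z + h)) - LG ε (v (x + z))) ^ 2 := by
          apply setIntegral_mono_on _ (hint.mono_set hWC) hWo.measurableSet
          · intro x hx
            have x1 : v (x + z) < 0 := hx.1.2
            have x2 : m < v (x + z + h) := hx.2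
            have y1 : LG ε (v (x + z)) = 0 := by simp [LG, max_eq_right x1.le]
            rw [y1, sub_zero]
            refine pow_le_pow_left₀ hR0 ?_ 2
            rw [LG, max_eq_left (hm0.trans x2).le, Real.le_log_iff_exp_le (by positivity)]
            have y2 : Real.exp R ^ 2 ≤ v (x + z + h) ^ 2 / ε ^ 2 := by
              rw [← div_pow]
              refine pow_le_pow_left₀ (Real.exp_pos R).le ?_ 2
              rw [le_div_iff₀ hε, hεd, mul_left_comm, ← Real.exp_add]
              simp [x2.le]
            have y3 : 1 ≤ Real.exp R := Real.one_le_exp hR0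
            nlinarith
          · exact integrableOn_const hWf
      _ ≤ _ := setIntegral_mono_set hint (Eventually.of_forall fun x => sq_nonneg _)
          (Eventually.of_forall hWC)
  have h2 := hR (M / ω + 1) (by positivity)
  have h3 : ω * (M / ω) = M := by field_simp
  have h4 : 0 ≤ M / ω := by positivity
  nlinarith [mul_nonneg hM0 h4]

end

end TorusInst

/-- On the flat torus (periodic boundary conditions on `ℝ^N`),
every nonconstant `C³` solution of `Δu + f(u) = 0` is weakly unstable: some Lipschitz
periodic test function `φ` makes the second variation `∫_Q (‖∇φ‖² − f'(u) φ²)` negative. -/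
theorem statement1 {N : ℕ} (hN : 1 ≤ N) (L : Fin N → ℝ) (hL : ∀ i, 0 < L i)
    (f : ℝ → ℝ) (hf : ContDiff ℝ 1 f)
    (u : EuclideanSpace ℝ (Fin N) → ℝ) (hu : ContDiff ℝ 3 u)
    (hnc : ∃ x y, u x ≠ u y)
    (hper : ∀ (x : EuclideanSpace ℝ (Fin N)) (i : Fin N),
      u (x + L i • EuclideanSpace.single i 1) = u x)
    (hpde : ∀ x, Lap u x + f (u x) = 0) :
    ∃ φ : EuclideanSpace ℝ (Fin N) → ℝ,
      (∃ K : NNReal, LipschitzWith K φ) ∧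
      (∀ (x : EuclideanSpace ℝ (Fin N)) (i : Fin N),
        φ (x + L i • EuclideanSpace.single i 1) = φ x) ∧
      (∫ x in {y : EuclideanSpace ℝ (Fin N) | ∀ i, y i ∈ Set.Ico 0 (L i)},
        (‖gradient φ x‖ ^ 2 - deriv f (u x) * φ x ^ 2)) < 0 := by
  by_contra hcon
  push Not at hcon
  have hper' : TorusInst.Per L u := hper
  have hud : Differentiable ℝ u := hu.differentiable (by norm_num)
  have hne : ∃ (i : Fin N) (x : EuclideanSpace ℝ (Fin N)),
      fderiv ℝ u x (EuclideanSpace.single i 1) ≠ 0 := by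
    by_contra hz
    push Not at hz
    obtain ⟨x, y, hxy⟩ := hnc
    refine hxy (is_const_of_fderiv_eq_zero (𝕜 := ℝ) hud (fun z => ?_) x y)
    have h1 := TorusInst.sum_sq (fderiv ℝ u z)
    simp only [hz, ne_eq, OfNat.ofNat_ne_zero, not_false_eq_true, zero_pow,
      Finset.sum_const_zero] at h1
    exact norm_eq_zero.1 (pow_eq_zero_iff two_ne_zero |>.1 h1.symm)
  obtain ⟨i, x₀, hx₀⟩ := hne
  have hb : ∃ b, 0 < fderiv ℝ u b (EuclideanSpace.single i 1) := by
    by_contra hz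
    push Not at hz
    have h1 := TorusInst.sign_change hL (u := fun x => -u x) hud.neg
      (fun x j => by show -u _ = -u x; rw [hper]) i
      (fun x => by rw [fderiv_fun_neg]; simpa using hz x) x₀
    rw [fderiv_fun_neg] at h1
    exact hx₀ (by simpa using h1)
  have ha : ∃ a, fderiv ℝ u a (EuclideanSpace.single i 1) < 0 := by
    by_contra hz
    push Not at hz
    exact hx₀ (TorusInst.sign_change hL hud hper' i hz x₀)
  obtain ⟨a, ha⟩ := ha
  obtain ⟨b, hb⟩ := hb
  have hdf : Continuous (deriv f) := hf.continuous_deriv (by norm_num)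
  have huc : Continuous u := hu.continuous
  exact TorusInst.contra hL (v := fun y => fderiv ℝ u y (EuclideanSpace.single i 1))
    (c := fun x => deriv f (u x))
    (TorusInst.fd_contDiff (n := 2) (by exact_mod_cast hu) _)
    (fun x j => by
      show fderiv ℝ u _ _ = _
      rw [hper'.fderiv])
    (by fun_prop) (TorusInst.lin_eq hf hu hpde _)
    (fun φ h1 h2 => hcon φ h1 h2) ha hb
end

section
/- Let f : ℝ → ℝ be continuously differentiable and let u : ℝ^N → ℝ be a C³ function satisfying Δu + f(u) = 0 on ℝ^N. Then at every point of U = {x : ∇u(x) ≠ 0} one has Δ(‖∇u‖) + f'(u) ‖∇u‖ = ‖∇u‖ · ‖DV‖_F², where V = ∇u/‖∇u‖ on U and ‖DV‖_F is the Frobenius norm of the derivative of V. (The function ‖∇u‖ is C² on the open set U, so its Laplacian there is classical.) -/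
open RealInnerProductSpace MeasureTheory Filter

lemma contDiff_dir {N : ℕ} {F : Type*} [NormedAddCommGroup F] [NormedSpace ℝ F]
    {g : EuclideanSpace ℝ (Fin N) → F} {m n : WithTop ℕ∞}
    (hg : ContDiff ℝ n g) (hmn : m + 1 ≤ n) (a : EuclideanSpace ℝ (Fin N)) :
    ContDiff ℝ m (fun y => fderiv ℝ g y a) :=
  (hg.fderiv_right hmn).clm_apply contDiff_const

lemma hess_symm {N : ℕ} {g : EuclideanSpace ℝ (Fin N) → ℝ} (hg : ContDiff ℝ 2 g)
    (x a b : EuclideanSpace ℝ (Fin N)) : Hess g x a b = Hess g x b a := by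
  have hd : DifferentiableAt ℝ (fderiv ℝ g) x :=
    ((hg.fderiv_right (m := 1) (by norm_num)).differentiable (by norm_num)) x
  have key : ∀ a b, Hess g x a b = fderiv ℝ (fderiv ℝ g) x b a := by
    intro a b
    unfold Hess
    rw [fderiv_clm_apply hd (differentiableAt_const a)]
    simp
  rw [key, key]
  exact (hg.contDiffAt.isSymmSndFDerivAt (by simp)) b a

lemma contDiff_grad {N : ℕ} {u : EuclideanSpace ℝ (Fin N) → ℝ} (hu : ContDiff ℝ 3 u) :
    ContDiff ℝ 2 (gradient u) := by
  unfold gradient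
  exact (InnerProductSpace.toDual ℝ (EuclideanSpace ℝ (Fin N))).symm.contDiff.comp
    (hu.fderiv_right (by norm_num))

lemma inner_grad {N : ℕ} (u : EuclideanSpace ℝ (Fin N) → ℝ)
    (y w : EuclideanSpace ℝ (Fin N)) : ⟪w, gradient u y⟫ = fderiv ℝ u y w := by
  rw [real_inner_comm]
  unfold gradient
  simp

lemma third {N : ℕ} {u : EuclideanSpace ℝ (Fin N) → ℝ} (hu : ContDiff ℝ 3 u)
    (x w e : EuclideanSpace ℝ (Fin N)) :
    ⟪w, fderiv ℝ (fun y => fderiv ℝ (gradient u) y e) x e⟫ =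
      fderiv ℝ (fun y => Hess u y e e) x w := by
  have hG := contDiff_grad hu
  have h1 : ∀ y, ⟪w, fderiv ℝ (gradient u) y e⟫ = Hess u y w e := by
    intro y
    unfold Hess
    have : (fun z => fderiv ℝ u z w) = fun z => ⟪w, gradient u z⟫ := by
      ext z; rw [inner_grad]
    rw [this, fderiv_inner_apply ℝ (differentiableAt_const w) (hG.differentiable (by norm_num) y)]
    simp
  have hD : Differentiable ℝ (fun y => fderiv ℝ (gradient u) y e) :=
    (contDiff_dir (m := 1) hG (by norm_num) e).differentiable (by norm_num)
  have h2 : ⟪w, fderiv ℝ (fun y => fderiv ℝ (gradient u) y e) x e⟫ =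
      fderiv ℝ (fun y => Hess u y w e) x e := by
    have : (fun y => Hess u y w e) = fun y => ⟪w, fderiv ℝ (gradient u) y e⟫ := by
      ext y; rw [h1]
    rw [this, fderiv_inner_apply ℝ (differentiableAt_const w) (hD x)]
    simp
  have h3 : (fun y => Hess u y w e) = fun y => Hess u y e w := by
    ext y; exact hess_symm (hu.of_le (by norm_num)) y w e
  rw [h2, h3]
  exact hess_symm (contDiff_dir (m := 2) hu (by norm_num) e) x w e

lemma sum_third {N : ℕ} {f : ℝ → ℝ} (hf : ContDiff ℝ 1 f)
    {u : EuclideanSpace ℝ (Fin N) → ℝ} (hu : ContDiff ℝ 3 u)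
    (hpde : ∀ x, Lap u x + f (u x) = 0) (x w : EuclideanSpace ℝ (Fin N)) :
    ∑ i : Fin N, fderiv ℝ (fun y => Hess u y (EuclideanSpace.single i 1)
      (EuclideanSpace.single i 1)) x w = - (deriv f (u x) * fderiv ℝ u x w) := by
  have hL : Lap u = fun y => - f (u y) := by
    ext y; linarith [hpde y]
  have hd : ∀ e, DifferentiableAt ℝ (fun y => Hess u y e e) x := fun e =>
    (contDiff_dir (m := 1) (contDiff_dir (m := 2) hu (by norm_num) e) (by norm_num)
      e).differentiable (by norm_num) x
  have h1 : fderiv ℝ (Lap u) x w = ∑ i : Fin N, fderiv ℝ (fun y => Hess u y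
      (EuclideanSpace.single i 1) (EuclideanSpace.single i 1)) x w := by
    have : Lap u = fun y => ∑ i : Fin N, Hess u y
      (EuclideanSpace.single i 1) (EuclideanSpace.single i 1) := rfl
    rw [this, fderiv_fun_sum (fun i _ => hd _)]
    simp
  rw [← h1, hL]
  have hc : HasFDerivAt (fun y => f (u y)) (deriv f (u x) • fderiv ℝ u x) x :=
    ((hf.differentiable (by norm_num)) (u x)).hasDerivAt.comp_hasFDerivAt x
      ((hu.differentiable (by norm_num)) x).hasFDerivAt
  rw [hc.fun_neg.fderiv]
  simp

lemma fderiv_norm_grad {N : ℕ} {G : EuclideanSpace ℝ (Fin N) → EuclideanSpace ℝ (Fin N)}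
    (hG : Differentiable ℝ G) (y : EuclideanSpace ℝ (Fin N)) (hy : G y ≠ 0) :
    DifferentiableAt ℝ (fun z => ‖G z‖) y ∧ ∀ e,
    fderiv ℝ (fun z => ‖G z‖) y e = ‖G y‖⁻¹ * ⟪G y, fderiv ℝ G y e⟫ := by
  have hd : DifferentiableAt ℝ (fun z => ‖G z‖) y := (hG y).norm ℝ hy
  refine ⟨hd, fun e => ?_⟩
  have h1 : (fun z => ‖G z‖ * ‖G z‖) = fun z => ⟪G z, G z⟫ := by
    ext z; rw [real_inner_self_eq_norm_mul_norm]
  have h2 := congrArg (fun F => fderiv ℝ F y e) h1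
  beta_reduce at h2
  rw [fderiv_inner_apply ℝ (hG y) (hG y), fderiv_fun_mul hd hd] at h2
  simp only [add_apply, smul_apply, smul_eq_mul] at h2
  rw [real_inner_comm (G y) (fderiv ℝ G y e)] at h2
  have hn : ‖G y‖ ≠ 0 := norm_ne_zero_iff.mpr hy
  field_simp
  linarith

lemma pointwise {N : ℕ} {G : EuclideanSpace ℝ (Fin N) → EuclideanSpace ℝ (Fin N)}
    (hG : ContDiff ℝ 2 G) (x e : EuclideanSpace ℝ (Fin N)) (hx : G x ≠ 0) :
    Hess (fun y => ‖G y‖) x e e = ‖G x‖ * ‖fderiv ℝ (fun y => ‖G y‖⁻¹ • G y) x e‖ ^ 2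
      + ‖G x‖⁻¹ * ⟪G x, fderiv ℝ (fun y => fderiv ℝ G y e) x e⟫ := by
  have hGd : Differentiable ℝ G := hG.differentiable (by norm_num)
  have hD : Differentiable ℝ (fun y => fderiv ℝ G y e) :=
    (contDiff_dir (m := 1) hG (by norm_num) e).differentiable (by norm_num)
  obtain ⟨hvd, hv⟩ := fderiv_norm_grad hGd x hx
  have hn : ‖G x‖ ≠ 0 := norm_ne_zero_iff.mpr hx
  have hinv : HasFDerivAt (fun y => ‖G y‖⁻¹)
      ((-(‖G x‖ ^ 2)⁻¹) • fderiv ℝ (fun y => ‖G y‖) x) x :=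
    (hasDerivAt_inv hn).comp_hasFDerivAt x hvd.hasFDerivAt
  have hV : fderiv ℝ (fun y => ‖G y‖⁻¹ • G y) x e = ‖G x‖⁻¹ • fderiv ℝ G x e -
      ((‖G x‖ ^ 3)⁻¹ * ⟪G x, fderiv ℝ G x e⟫) • G x := by
    rw [(hinv.fun_smul (hGd x).hasFDerivAt).fderiv]
    simp only [add_apply, smul_apply, ContinuousLinearMap.smulRight_apply, smul_eq_mul, hv]
    rw [sub_eq_add_neg, ← neg_smul]
    congr 2
    field_simp
  have hev : (fun y => fderiv ℝ (fun z => ‖G z‖) y e) =ᶠ[nhds x]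
      fun y => ‖G y‖⁻¹ * ⟪G y, fderiv ℝ G y e⟫ := by
    filter_upwards [hG.continuous.continuousAt.eventually_ne hx] with y hy
    exact (fderiv_norm_grad hGd y hy).2 e
  unfold Hess
  rw [hev.fderiv_eq, fderiv_fun_mul hinv.differentiableAt ((hGd x).inner ℝ (hD x)), hinv.fderiv, hV,
    norm_sub_sq_real]
  simp only [add_apply, smul_apply, smul_eq_mul, hv, norm_smul, inner_smul_left, inner_smul_right,
    norm_mul, norm_inv, norm_pow, norm_norm, mul_pow]
  rw [fderiv_inner_apply ℝ (hGd x) (hD x), real_inner_self_eq_norm_sq,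
    real_inner_comm (G x) (fderiv ℝ G x e)]
  simp only [Real.norm_eq_abs, sq_abs, map_mul, map_inv₀, map_pow, conj_trivial]
  field_simp
  ring

/-- For a `C³` solution of `Δu + f(u) = 0` on `ℝ^N`, the function
`v = ‖∇u‖` satisfies, at every point of `U = {∇u ≠ 0}`, the pointwise identity
`Δv + f'(u) v = v ‖DV‖_F²`, where `V = ∇u/‖∇u‖`. -/
theorem statement4 {N : ℕ} (hN : 1 ≤ N) (f : ℝ → ℝ) (hf : ContDiff ℝ 1 f)
    (u : EuclideanSpace ℝ (Fin N) → ℝ) (hu : ContDiff ℝ 3 u)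
    (hpde : ∀ x, Lap u x + f (u x) = 0)
    (x : EuclideanSpace ℝ (Fin N)) (hx : gradient u x ≠ 0) :
    Lap (fun y => ‖gradient u y‖) x + deriv f (u x) * ‖gradient u x‖ =
      ‖gradient u x‖ * FrobSq (fderiv ℝ (NGrad u) x) := by
  have hG := contDiff_grad hu
  have hn : ‖gradient u x‖ ≠ 0 := norm_ne_zero_iff.mpr hx
  have hs := sum_third hf hu hpde x (gradient u x)
  rw [← inner_grad, real_inner_self_eq_norm_sq] at hs
  have hV : NGrad u = fun y => ‖gradient u y‖⁻¹ • gradient u y := rfl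
  unfold Lap FrobSq
  simp only [pointwise hG x _ hx, third hu]
  rw [Finset.sum_add_distrib, ← Finset.mul_sum, ← Finset.mul_sum, hs, hV]
  field_simp
  ring
end

section
/- Let l > 0, let f : ℝ → ℝ be continuously differentiable, and let u : ℝ → ℝ be a nonconstant C³ function with u(t + l) = u(t) for all t, satisfying u''(t) + f(u(t)) = 0 for all t ∈ ℝ. Then there exists a C¹ function φ : ℝ → ℝ with φ(t + l) = φ(t) for all t such that ∫₀^l ( φ'(t)² − f'(u(t)) φ(t)² ) dt < 0. -/
/-- the paper's one-dimensional case, `M = S¹`. Every nonconstant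
`l`-periodic `C³` solution of `u'' + f(u) = 0` has a direction of strictly negative
second variation: there is a `C¹` `l`-periodic `φ` with `∫₀^l (φ'² − f'(u) φ²) < 0`. -/
theorem statement6 (l : ℝ) (hl : 0 < l) (f : ℝ → ℝ) (hf : ContDiff ℝ 1 f)
    (u : ℝ → ℝ) (hu : ContDiff ℝ 3 u)
    (hnc : ∃ s t, u s ≠ u t)
    (hper : ∀ t, u (t + l) = u t)
    (hode : ∀ t, deriv (deriv u) t + f (u t) = 0) :
    ∃ φ : ℝ → ℝ, ContDiff ℝ 1 φ ∧ (∀ t, φ (t + l) = φ t) ∧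
      (∫ t in (0:ℝ)..l, (deriv φ t ^ 2 - deriv f (u t) * φ t ^ 2)) < 0 := by
  have hu' : ContDiff ℝ 2 (deriv u) := by
    have : ContDiff ℝ (2+1) u := by norm_num; exact hu
    exact (contDiff_succ_iff_deriv.1 this).2.2
  have hud : Differentiable ℝ u := hu.differentiable (by norm_num)
  obtain ⟨v, hv⟩ : ∃ v, v = deriv u := ⟨_, rfl⟩
  rw [← hv] at hu' hode
  have hvd : Differentiable ℝ v := hu'.differentiable (by norm_num)
  have hv' : ContDiff ℝ 1 (deriv v) := by
    have : ContDiff ℝ (1+1) v := by norm_num; exact hu'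
    exact (contDiff_succ_iff_deriv.1 this).2.2
  obtain ⟨v1, hv1⟩ : ∃ v1, v1 = deriv v := ⟨_, rfl⟩
  rw [← hv1] at hv' hode
  have hfd : Differentiable ℝ f := hf.differentiable (by norm_num)
  have dv : ∀ t, HasDerivAt v (v1 t) t := fun t => by rw [hv1]; exact (hvd t).hasDerivAt
  have du : ∀ t, HasDerivAt u (v t) t := fun t => by rw [hv]; exact (hud t).hasDerivAt
  obtain ⟨q, hq⟩ : ∃ q : ℝ → ℝ, q = fun t => deriv f (u t) := ⟨_, rfl⟩
  have qc : Continuous q := by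
    rw [hq]; exact (hf.continuous_deriv (by norm_num)).comp hud.continuous
  have vc : Continuous v := hu'.continuous
  have v1c : Continuous v1 := hv'.continuous
  have dv1 : ∀ t, HasDerivAt v1 (-(q t * v t)) t := fun t => by
    have e : v1 = fun t => -f (u t) := by
      funext t; linarith [hode t]
    rw [e, hq]
    exact ((hfd (u t)).hasDerivAt.comp t (du t)).neg
  have pv : ∀ t, v (t + l) = v t := fun t => by
    have e : (fun t => u (t + l)) = u := funext hper
    rw [hv, ← deriv_comp_add_const, e]
  have pv1 : ∀ t, v1 (t + l) = v1 t := fun t => by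
    have e : (fun t => v (t + l)) = v := funext pv
    rw [hv1, ← deriv_comp_add_const, e]
  obtain ⟨a, -, ha⟩ : ∃ c ∈ Set.Ioo 0 l, deriv u c = 0 :=
    exists_deriv_eq_zero hl hud.continuous.continuousOn (by simpa using (hper 0).symm)
  rw [← hv] at ha
  obtain ⟨b0, hb0⟩ : ∃ b, v b ≠ 0 := by
    by_contra! h
    obtain ⟨s, t, hst⟩ := hnc
    exact hst (is_const_of_deriv_eq_zero hud (fun x => by rw [← hv]; exact h x) s t)
  obtain ⟨b, hbI, hb1⟩ := Function.Periodic.exists_mem_Ico (f := v) pv hl b0 a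
  have hb : v b ≠ 0 := by rw [← hb1]; exact hb0
  obtain ⟨Q, hQ⟩ : ∃ Q, Q = ∫ t in (0:ℝ)..l, q t := ⟨_, rfl⟩
  obtain ⟨ε, hε⟩ : ∃ ε, ε = |v b| * Real.exp (-((l + |Q|) / 2 + 1)) := ⟨_, rfl⟩
  have hvb : 0 < |v b| := abs_pos.2 hb
  have εpos : 0 < ε := by rw [hε]; positivity
  have pos : ∀ t, 0 < v t ^ 2 + ε ^ 2 := fun t => by positivity
  obtain ⟨w, hw⟩ : ∃ w : ℝ → ℝ, w = fun t => v1 t ^ 2 / (v t ^ 2 + ε ^ 2) := ⟨_, rfl⟩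
  have wc : Continuous w := by
    rw [hw]
    exact (v1c.pow 2).div (by fun_prop) (fun t => (pos t).ne')
  have ds : ∀ t, HasDerivAt (fun t => v t ^ 2 + ε ^ 2) (2 * v t * v1 t) t := fun t => by
    simpa using ((dv t).pow 2).add_const (ε ^ 2)
  -- lower bound for the integral of `w`
  have key : -Q < ∫ t in (0:ℝ)..l, w t := by
    have e1 : ∫ t in (0:ℝ)..l, w t = ∫ t in a..(a + l), w t := by
      have wp : Function.Periodic w l := fun t => by simp only [hw, pv, pv1]
      simpa using wp.intervalIntegral_add_eq 0 a
    have dg : ∀ t, HasDerivAt (fun t => Real.log (v t ^ 2 + ε ^ 2))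
        (2 * v t * v1 t / (v t ^ 2 + ε ^ 2)) t := fun t => (ds t).log (pos t).ne'
    have gc : Continuous fun t => 2 * v t * v1 t / (v t ^ 2 + ε ^ 2) :=
      Continuous.div (by fun_prop) (by fun_prop) (fun t => (pos t).ne')
    have e2 := intervalIntegral.integral_eq_sub_of_hasDerivAt (a := a) (b := b)
      (fun t _ => dg t) (gc.intervalIntegrable _ _)
    have wc1 : Continuous fun t => 1 + w t := by fun_prop
    have i1 : ∫ t in a..b, 2 * v t * v1 t / (v t ^ 2 + ε ^ 2) ≤ ∫ t in a..b, (1 + w t) := by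
      apply intervalIntegral.integral_mono_on hbI.1 (gc.intervalIntegrable _ _)
        (wc1.intervalIntegrable _ _)
      intro t _
      rw [hw]
      have := pos t
      have h3 : 1 + v1 t ^ 2 / (v t ^ 2 + ε ^ 2)
          = (v t ^ 2 + ε ^ 2 + v1 t ^ 2) / (v t ^ 2 + ε ^ 2) := by field_simp
      simp only [h3]
      gcongr
      nlinarith [sq_nonneg (v t - v1 t), sq_nonneg ε]
    have i2 : ∫ t in a..b, (1 + w t) ≤ ∫ t in a..(a + l), (1 + w t) := by
      apply intervalIntegral.integral_mono_interval le_rfl hbI.1 hbI.2.le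
        _ (wc1.intervalIntegrable _ _)
      refine Filter.Eventually.of_forall fun t => ?_
      have := pos t
      simp only [hw, Pi.zero_apply]
      positivity
    have e3 : ∫ t in a..(a + l), (1 + w t) = l + ∫ t in a..(a + l), w t := by
      rw [intervalIntegral.integral_add (by simp) (wc.intervalIntegrable _ _)]
      simp
    have e4 : Real.log (v a ^ 2 + ε ^ 2) = 2 * Real.log ε := by
      rw [ha]; simp
    have e5 : 2 * Real.log |v b| ≤ Real.log (v b ^ 2 + ε ^ 2) := by
      have : Real.log (|v b| ^ 2) = 2 * Real.log |v b| := by simp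
      rw [← this]
      apply Real.log_le_log (by positivity)
      rw [sq_abs]; nlinarith [sq_nonneg ε]
    have e6 : Real.log ε = Real.log |v b| - ((l + |Q|) / 2 + 1) := by
      rw [hε, Real.log_mul hvb.ne' (Real.exp_pos _).ne', Real.log_exp]; ring
    have := neg_abs_le Q
    linarith
  have dφ : ∀ t, HasDerivAt (fun t => √(v t ^ 2 + ε ^ 2))
      (2 * v t * v1 t / (2 * √(v t ^ 2 + ε ^ 2))) t := fun t => (ds t).sqrt (pos t).ne'
  refine ⟨fun t => √(v t ^ 2 + ε ^ 2), ?_, fun t => by simp only [pv], ?_⟩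
  · refine ContDiff.sqrt ?_ (fun t => (pos t).ne')
    exact ((hu'.of_le (by norm_num)).pow 2).add contDiff_const
  have e1 : ∀ t, deriv (fun t => √(v t ^ 2 + ε ^ 2)) t ^ 2
      - deriv f (u t) * √(v t ^ 2 + ε ^ 2) ^ 2
      = (v1 t * v1 t + v t * (-(q t * v t))) - ε ^ 2 * (w t + q t) := fun t => by
    have := pos t
    rw [(dφ t).deriv, div_pow, mul_pow 2 (√_), Real.sq_sqrt this.le, hq, hw]
    field_simp
    ring
  simp only [e1]
  have c1 : Continuous fun t => v1 t * v1 t + v t * (-(q t * v t)) := by fun_prop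
  have c2 : Continuous fun t => ε ^ 2 * (w t + q t) := by fun_prop
  rw [intervalIntegral.integral_sub (c1.intervalIntegrable _ _) (c2.intervalIntegrable _ _),
    intervalIntegral.integral_eq_sub_of_hasDerivAt (f := fun t => v t * v1 t)
      (fun t _ => (dv t).mul (dv1 t)) (c1.intervalIntegrable _ _),
    intervalIntegral.integral_const_mul, intervalIntegral.integral_add
      (wc.intervalIntegrable _ _) (qc.intervalIntegrable _ _), ← hQ]
  have p0 := pv 0
  have p1 := pv1 0
  rw [zero_add] at p0 p1
  rw [p0, p1]
  have : 0 < ε ^ 2 * ((∫ t in (0:ℝ)..l, w t) + Q) := mul_pos (by positivity) (by linarith)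
  linarith
end

section
/- Let g : ℝ → ℝ be locally Lipschitz and let h : ℝ → ℝ be a C² function satisfying h''(t) + g(h(t)) = 0 for all t ∈ ℝ. If h'(a) = 0 and h'(b) = 0 for some real numbers a < b, then h is periodic with period 2(b − a): h(t + 2(b − a)) = h(t) for all t ∈ ℝ. -/
open Filter Topology in
theorem ode_unique_aux {E : Type*} [NormedAddCommGroup E] [NormedSpace ℝ E]
    (v : E → E) (hv : LocallyLipschitz v) (F G : ℝ → E)
    (hF : ∀ t, HasDerivAt F (v (F t)) t) (hG : ∀ t, HasDerivAt G (v (G t)) t)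
    (c : ℝ) (hc : F c = G c) : F = G := by
  have cF : Continuous F := continuous_iff_continuousAt.2 fun t => (hF t).continuousAt
  have cG : Continuous G := continuous_iff_continuousAt.2 fun t => (hG t).continuousAt
  have hclopen : IsClopen {t | F t = G t} := by
    refine ⟨isClosed_eq cF cG, isOpen_iff_mem_nhds.2 fun t ht => ?_⟩
    have ht' : F t = G t := ht
    obtain ⟨K, s, hs, hK⟩ := hv (F t)
    have h1 : ∀ᶠ u in 𝓝 t, F u ∈ s := cF.continuousAt hs
    have h2 : ∀ᶠ u in 𝓝 t, G u ∈ s := cG.continuousAt (by rw [← ht']; exact hs)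
    exact ODE_solution_unique_of_eventually (v := fun _ => v) (s := fun _ => s) (K := K)
      (Eventually.of_forall fun _ => hK) (h1.mono fun u hu => ⟨hF u, hu⟩)
      (h2.mono fun u hu => ⟨hG u, hu⟩) ht'
  have huniv := hclopen.eq_univ ⟨c, hc⟩
  funext t
  have : t ∈ {t | F t = G t} := huniv ▸ Set.mem_univ t
  exact this

theorem ode_symm_aux (g : ℝ → ℝ) (hg : LocallyLipschitz g)
    (h : ℝ → ℝ) (hh : ContDiff ℝ 2 h)
    (hode : ∀ t, deriv (deriv h) t + g (h t) = 0)
    (c : ℝ) (hc : deriv h c = 0) (t : ℝ) : h (2 * c - t) = h t := by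
  have d1 : ∀ t, HasDerivAt h (deriv h t) t := fun t =>
    (hh.differentiable (by norm_num) t).hasDerivAt
  have d2 : ∀ t, HasDerivAt (deriv h) (-g (h t)) t := fun t => by
    have hd : ContDiff ℝ 1 (deriv h) := by
      have : ContDiff ℝ (1 + 1) h := by simpa [one_add_one_eq_two] using hh
      exact (contDiff_succ_iff_deriv.1 this).2.2
    have := (hd.differentiable (by norm_num) t).hasDerivAt
    rwa [eq_neg_of_add_eq_zero_left (hode t)] at this
  have hv : LocallyLipschitz (fun p : ℝ × ℝ => (p.2, -g p.1)) := by
    have hneg : LocallyLipschitz (fun x : ℝ => -x) := LipschitzWith.id.neg.locallyLipschitz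
    exact LipschitzWith.prod_snd.locallyLipschitz.prodMk
      (hneg.comp (hg.comp LipschitzWith.prod_fst.locallyLipschitz))
  have hr : ∀ t, HasDerivAt (fun t : ℝ => 2 * c - t) (-1) t := fun t => by
    simpa using (hasDerivAt_id t).const_sub (2 * c)
  have key := ode_unique_aux _ hv (fun t => (h (2 * c - t), -deriv h (2 * c - t)))
    (fun t => (h t, deriv h t))
    (fun t => by
      have e1 := (d1 (2 * c - t)).comp t (hr t)
      have e2 := ((d2 (2 * c - t)).comp t (hr t)).neg
      have := e1.prodMk e2
      simpa [Function.comp_def] using this)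
    (fun t => (d1 t).prodMk (d2 t)) c
    (by simp [show 2 * c - c = c by ring, hc])
  exact congrArg Prod.fst (congrFun key t)

/-- periodicity, Lemma 3.5(d). A `C²` solution of `h'' + g(h) = 0`
(`g` locally Lipschitz) with two critical points `a < b` is periodic of period `2(b − a)`. -/
theorem statement9 (g : ℝ → ℝ) (hg : LocallyLipschitz g)
    (h : ℝ → ℝ) (hh : ContDiff ℝ 2 h)
    (hode : ∀ t, deriv (deriv h) t + g (h t) = 0)
    (a b : ℝ) (hab : a < b) (ha : deriv h a = 0) (hb : deriv h b = 0) :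
    ∀ t : ℝ, h (t + 2 * (b - a)) = h t := by
  intro t
  rw [← ode_symm_aux g hg h hh hode a ha t, ← ode_symm_aux g hg h hh hode b hb (2 * a - t)]
  congr 1
  ring
end

section
/- Let u : ℝ^N → ℝ be a C² function and suppose that DV ≡ 0 on U, i.e. the normalized gradient V = ∇u/‖∇u‖ has vanishing derivative at every point of U = {x : ∇u(x) ≠ 0}. Then at every x ∈ U the Hessian of u has the rank-one form Hess u(x)(w₁, w₂) = Δu(x) · ⟨V(x), w₁⟩ ⟨V(x), w₂⟩ for all w₁, w₂ ∈ ℝ^N. -/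
open RealInnerProductSpace MeasureTheory Filter

/-- equation (forma-Hu) of the paper, flat case. If the normalized
gradient `V` of a `C²` function `u` is parallel (`DV ≡ 0` on `U = {∇u ≠ 0}`), then on `U`
the Hessian has the rank-one form `Hess u = (Δu) V ⊗ V*`. -/
theorem statement10 {N : ℕ} (hN : 1 ≤ N)
    (u : EuclideanSpace ℝ (Fin N) → ℝ) (hu : ContDiff ℝ 2 u)
    (hDV : ∀ x, gradient u x ≠ 0 → fderiv ℝ (NGrad u) x = 0)
    (x : EuclideanSpace ℝ (Fin N)) (hx : gradient u x ≠ 0) :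
    ∀ w₁ w₂ : EuclideanSpace ℝ (Fin N),
      Hess u x w₁ w₂ = Lap u x * ⟪NGrad u x, w₁⟫ * ⟪NGrad u x, w₂⟫ := by
  have hf1 : ContDiff ℝ 1 (fderiv ℝ u) := hu.fderiv_right (by norm_num)
  have hgd : DifferentiableAt ℝ (gradient u) x := by
    have h1 : DifferentiableAt ℝ (fderiv ℝ u) x := (hf1.differentiable (by norm_num)) x
    exact ((InnerProductSpace.toDual ℝ (EuclideanSpace ℝ (Fin N))).symm.toContinuousLinearEquiv.toContinuousLinearMap.differentiableAt).comp x h1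
  have hnd : DifferentiableAt ℝ (fun y => ‖gradient u y‖) x := hgd.norm ℝ hx
  have hn0 : ‖gradient u x‖ ≠ 0 := norm_ne_zero_iff.mpr hx
  have hVd : DifferentiableAt ℝ (NGrad u) x := (hnd.inv hn0).smul hgd
  have hV0 : HasFDerivAt (NGrad u) (0 : EuclideanSpace ℝ (Fin N) →L[ℝ] EuclideanSpace ℝ (Fin N)) x := by
    rw [← hDV x hx]; exact hVd.hasFDerivAt
  have hVn : ‖NGrad u x‖ = 1 := by
    simp [NGrad, norm_smul, hn0]
  set a := fderiv ℝ (fun y => ‖gradient u y‖) x with ha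
  have hfd : ∀ y w, fderiv ℝ u y w = ‖gradient u y‖ * ⟪NGrad u y, w⟫ := by
    intro y w
    have h1 : fderiv ℝ u y w = ⟪gradient u y, w⟫ := by
      simp [gradient]
    rw [h1]
    by_cases h : gradient u y = 0
    · simp [h]
    · have h' : ‖gradient u y‖ ≠ 0 := norm_ne_zero_iff.mpr h
      rw [NGrad, real_inner_smul_left]
      field_simp
  have hH : ∀ w₁ w₂, Hess u x w₁ w₂ = a w₂ * ⟪NGrad u x, w₁⟫ := by
    intro w₁ w₂
    have h2 := hnd.hasFDerivAt.mul (hV0.inner ℝ (hasFDerivAt_const w₁ x))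
    have h3 : (fun y => fderiv ℝ u y w₁) = (fun y => ‖gradient u y‖ * ⟪NGrad u y, w₁⟫) := by
      funext y; exact hfd y w₁
    unfold Hess
    rw [h3]
    refine (congrArg (fun L => L w₂) h2.fderiv).trans ?_
    simp [ha, mul_comm]
  have hS : ∀ w₁ w₂, Hess u x w₁ w₂ = Hess u x w₂ w₁ := by
    have h1 : DifferentiableAt ℝ (fderiv ℝ u) x := (hf1.differentiable (by norm_num)) x
    have hs : IsSymmSndFDerivAt ℝ u x := hu.contDiffAt.isSymmSndFDerivAt (by simp)
    have key : ∀ w₁ w₂, Hess u x w₁ w₂ = fderiv ℝ (fderiv ℝ u) x w₂ w₁ := by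
      intro w₁ w₂
      unfold Hess
      rw [fderiv_clm_apply h1 (differentiableAt_const w₁)]
      simp
    intro w₁ w₂
    rw [key, key]
    exact hs.eq w₂ w₁
  have hVV : ⟪NGrad u x, NGrad u x⟫ = 1 := by
    rw [real_inner_self_eq_norm_sq, hVn]; norm_num
  have haV : ∀ w, a w = a (NGrad u x) * ⟪NGrad u x, w⟫ := by
    intro w
    have := hS (NGrad u x) w
    rw [hH, hH, hVV] at this
    linarith
  have hL : Lap u x = a (NGrad u x) := by
    have h5 : ∑ i : Fin N, ⟪NGrad u x, EuclideanSpace.single i (1:ℝ)⟫ ^ 2 = 1 := by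
      have h6 := EuclideanSpace.norm_sq_eq (NGrad u x)
      rw [hVn] at h6
      simpa [EuclideanSpace.inner_single_right] using h6.symm
    unfold Lap
    calc _ = ∑ i : Fin N, a (NGrad u x) * ⟪NGrad u x, EuclideanSpace.single i (1:ℝ)⟫ ^ 2 := by
          refine Finset.sum_congr rfl fun i _ => ?_
          rw [hH, haV (EuclideanSpace.single i (1:ℝ))]; ring
      _ = _ := by rw [← Finset.mul_sum, h5, mul_one]
  intro w₁ w₂
  rw [hH, hL, haV w₂]
  ring
end

section
/- Let u : ℝ^N → ℝ be a C² function with DV ≡ 0 on U, where U = {x : ∇u(x) ≠ 0} and V = ∇u/‖∇u‖, and let p ∈ U. Then the connected component of the level set {x ∈ ℝ^N : u(x) = u(p)} containing p is exactly the affine hyperplane P = {x ∈ ℝ^N : ⟨x − p, ∇u(p)⟩ = 0}; moreover P ⊆ U, and both ∇u and ‖∇u‖ are constant along P (with ‖∇u‖ > 0 there). -/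
open RealInnerProductSpace MeasureTheory Filter

/-- Mean value theorem in terms of the gradient. -/
lemma aux_mvt {N : ℕ} (u : EuclideanSpace ℝ (Fin N) → ℝ) (hd : Differentiable ℝ u)
    (x y : EuclideanSpace ℝ (Fin N)) :
    ∃ z ∈ segment ℝ x y, u y - u x = ⟪gradient u z, y - x⟫ := by
  obtain ⟨z, hz, h⟩ := domain_mvt (f := u) (f' := fun z => fderiv ℝ u z) (s := Set.univ)
    (x := x) (y := y) (fun z _ => (hd z).hasFDerivAt.hasFDerivWithinAt) convex_univ
    (Set.mem_univ _) (Set.mem_univ _)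
  refine ⟨z, hz, ?_⟩
  rw [h, gradient, InnerProductSpace.toDual_symm_apply]

/-- Near a regular point, the gradient is a positive multiple of the gradient there. -/
lemma aux_local {N : ℕ} (u : EuclideanSpace ℝ (Fin N) → ℝ) (hu : ContDiff ℝ 2 u)
    (hDV : ∀ x, gradient u x ≠ 0 → fderiv ℝ (NGrad u) x = 0)
    (q : EuclideanSpace ℝ (Fin N)) (hq : gradient u q ≠ 0) :
    ∃ r > 0, ∀ x ∈ Metric.ball q r, ∃ c : ℝ, 0 < c ∧ gradient u x = c • gradient u q := by
  have hg : ContDiff ℝ 1 (gradient u) := by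
    have h1 : ContDiff ℝ 1 (fderiv ℝ u) := hu.fderiv_right (by norm_num)
    exact (InnerProductSpace.toDual ℝ
      (EuclideanSpace ℝ (Fin N))).symm.toContinuousLinearEquiv.contDiff.comp h1
  have hopen : IsOpen {x | gradient u x ≠ 0} := isOpen_ne_fun hg.continuous continuous_const
  obtain ⟨r, hr, hball⟩ := Metric.isOpen_iff.1 hopen q hq
  refine ⟨r, hr, fun x hx => ?_⟩
  have hVd : DifferentiableOn ℝ (NGrad u) (Metric.ball q r) := by
    intro y hy
    have hy0 : gradient u y ≠ 0 := hball hy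
    have hgy : DifferentiableAt ℝ (gradient u) y := (hg.differentiable (by norm_num)) y
    exact (((hgy.norm ℝ hy0).inv (norm_ne_zero_iff.2 hy0)).smul hgy).differentiableWithinAt
  have hV : NGrad u x = NGrad u q := by
    refine (Metric.isOpen_ball).is_const_of_fderiv_eq_zero
      (convex_ball q r).isPreconnected hVd (fun y hy => hDV y (hball hy)) hx
      (Metric.mem_ball_self hr)
  have hx0 : gradient u x ≠ 0 := hball hx
  have hxn := norm_pos_iff.2 hx0
  have hqn := norm_pos_iff.2 hq
  refine ⟨‖gradient u x‖ * ‖gradient u q‖⁻¹, by positivity, ?_⟩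
  unfold NGrad at hV
  rw [mul_smul, ← hV, smul_smul, mul_inv_cancel₀ hxn.ne', one_smul]

/-- The gradient is locally constant in directions orthogonal to it. -/
lemma aux_shift {N : ℕ} (u : EuclideanSpace ℝ (Fin N) → ℝ) (hu : ContDiff ℝ 2 u)
    (hDV : ∀ x, gradient u x ≠ 0 → fderiv ℝ (NGrad u) x = 0)
    (q : EuclideanSpace ℝ (Fin N)) (hq : gradient u q ≠ 0) :
    ∃ r > 0, ∀ h : EuclideanSpace ℝ (Fin N), ‖h‖ < r → ⟪gradient u q, h⟫ = 0 →
      gradient u (q + h) = gradient u q := by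
  obtain ⟨r, hr, H⟩ := aux_local u hu hDV q hq
  refine ⟨r / 2, by positivity, fun h hh ho => ?_⟩
  have key : (fun y => u (y + h)) =ᶠ[nhds q] u := by
    filter_upwards [Metric.ball_mem_nhds q (half_pos hr)] with y hy
    obtain ⟨z, hz, e⟩ := aux_mvt u (hu.differentiable (by norm_num)) y (y + h)
    have hy' : ‖y - q‖ < r / 2 := by rwa [Metric.mem_ball, dist_eq_norm] at hy
    have hzb : z ∈ Metric.ball q r := by
      refine (convex_ball q r).segment_subset ?_ ?_ hz
      · rw [Metric.mem_ball, dist_eq_norm]; linarith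
      · rw [Metric.mem_ball, dist_eq_norm]
        have : y + h - q = (y - q) + h := by abel
        rw [this]
        linarith [norm_add_le (y - q) h]
    obtain ⟨c, -, hc⟩ := H z hzb
    rw [hc, add_sub_cancel_left, real_inner_smul_left, ho, mul_zero] at e
    linarith
  have h2 := key.fderiv_eq (𝕜 := ℝ)
  rw [fderiv_comp_add_right] at h2
  unfold gradient
  rw [h2]

/-- The gradient is constant along the hyperplane. -/
lemma aux_const_s11 {N : ℕ} (u : EuclideanSpace ℝ (Fin N) → ℝ) (hu : ContDiff ℝ 2 u)
    (hDV : ∀ x, gradient u x ≠ 0 → fderiv ℝ (NGrad u) x = 0)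
    (p : EuclideanSpace ℝ (Fin N)) (hp : gradient u p ≠ 0)
    (w : EuclideanSpace ℝ (Fin N)) (hw : ⟪gradient u p, w⟫ = 0) :
    gradient u (p + w) = gradient u p := by
  have hgc : Continuous (gradient u) :=
    (InnerProductSpace.toDual ℝ (EuclideanSpace ℝ (Fin N))).symm.continuous.comp
      (hu.continuous_fderiv (by norm_num))
  have hclopen : IsClopen {t : ℝ | gradient u (p + t • w) = gradient u p} := by
    constructor
    · exact isClosed_eq (hgc.comp (by fun_prop)) continuous_const
    · rw [isOpen_iff_mem_nhds]
      intro t ht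
      have ht' : gradient u (p + t • w) = gradient u p := ht
      obtain ⟨r, hr, H⟩ := aux_shift u hu hDV (p + t • w) (by rw [ht']; exact hp)
      have hc : Tendsto (fun s : ℝ => ‖(s - t) • w‖) (nhds t) (nhds 0) := by
        have : Continuous (fun s : ℝ => ‖(s - t) • w‖) := by fun_prop
        simpa using this.tendsto t
      filter_upwards [hc.eventually (gt_mem_nhds hr)] with s hs
      have := H ((s - t) • w) hs (by rw [ht', real_inner_smul_right, hw, mul_zero])
      have e : p + t • w + (s - t) • w = p + s • w := by rw [sub_smul]; abel
      rw [e, ht'] at this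
      exact this
  have huniv := hclopen.eq_univ ⟨0, by simp⟩
  have : (1 : ℝ) ∈ {t : ℝ | gradient u (p + t • w) = gradient u p} := by
    rw [huniv]; trivial
  simpa using this

/-- flat-space instance of Lemma 3.4. If `DV ≡ 0` on `U = {∇u ≠ 0}`
and `p ∈ U`, the connected component through `p` of the level set `{u = u(p)}` is the
affine hyperplane `P = {x | ⟨x − p, ∇u(p)⟩ = 0}`; moreover `P ⊆ U` and `∇u` (hence
`‖∇u‖ > 0`) is constant along `P`. -/
theorem statement11 {N : ℕ} (hN : 1 ≤ N)
    (u : EuclideanSpace ℝ (Fin N) → ℝ) (hu : ContDiff ℝ 2 u)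
    (hDV : ∀ x, gradient u x ≠ 0 → fderiv ℝ (NGrad u) x = 0)
    (p : EuclideanSpace ℝ (Fin N)) (hp : gradient u p ≠ 0) :
    connectedComponentIn {x | u x = u p} p =
        {x : EuclideanSpace ℝ (Fin N) | ⟪x - p, gradient u p⟫ = 0} ∧
      {x : EuclideanSpace ℝ (Fin N) | ⟪x - p, gradient u p⟫ = 0} ⊆
        {x : EuclideanSpace ℝ (Fin N) | gradient u x ≠ 0} ∧
      (∀ x : EuclideanSpace ℝ (Fin N), ⟪x - p, gradient u p⟫ = 0 →
        gradient u x = gradient u p ∧ ‖gradient u x‖ = ‖gradient u p‖) ∧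
      0 < ‖gradient u p‖ := by
  have hd : Differentiable ℝ u := hu.differentiable (by norm_num)
  have hconst : ∀ x : EuclideanSpace ℝ (Fin N), ⟪x - p, gradient u p⟫ = 0 →
      gradient u x = gradient u p := by
    intro x hx
    have := aux_const_s11 u hu hDV p hp (x - p) (by rw [real_inner_comm]; exact hx)
    rwa [add_sub_cancel] at this
  have hconv : Convex ℝ {x : EuclideanSpace ℝ (Fin N) | ⟪x - p, gradient u p⟫ = 0} := by
    intro x hx y hy a b _ _ hab
    simp only [Set.mem_ofPred_eq] at hx hy ⊢
    have e : a • x + b • y - p = a • (x - p) + b • (y - p) := by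
      have : p = a • p + b • p := by rw [← add_smul, hab, one_smul]
      rw [smul_sub, smul_sub]
      nth_rewrite 1 [this]
      abel
    rw [e, inner_add_left, real_inner_smul_left, real_inner_smul_left, hx, hy]
    simp
  have hpP : p ∈ {x : EuclideanSpace ℝ (Fin N) | ⟪x - p, gradient u p⟫ = 0} := by simp
  have hclosed : IsClosed {x : EuclideanSpace ℝ (Fin N) | ⟪x - p, gradient u p⟫ = 0} :=
    isClosed_eq (by fun_prop) continuous_const
  have hlevel : ∀ x : EuclideanSpace ℝ (Fin N), ⟪x - p, gradient u p⟫ = 0 → u x = u p := by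
    intro x hx
    obtain ⟨z, hz, e⟩ := aux_mvt u hd p x
    have hzP := hconv.segment_subset hpP hx hz
    rw [hconst z hzP, real_inner_comm, hx] at e
    linarith
  refine ⟨Set.Subset.antisymm ?_ ?_, ?_, ?_, norm_pos_iff.2 hp⟩
  · intro x hx
    by_contra hxP
    have hC : IsPreconnected (connectedComponentIn {x | u x = u p} p) :=
      isPreconnected_connectedComponentIn
    have hint : ∀ q : EuclideanSpace ℝ (Fin N), ⟪q - p, gradient u p⟫ = 0 →
        q ∈ interior {x | u x = u p → ⟪x - p, gradient u p⟫ = 0} := by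
      intro q hq
      have hgq := hconst q hq
      obtain ⟨r, hr, H⟩ := aux_local u hu hDV q (by rw [hgq]; exact hp)
      rw [mem_interior_iff_mem_nhds]
      filter_upwards [Metric.ball_mem_nhds q hr] with y hy huy
      obtain ⟨z, hz, e⟩ := aux_mvt u hd q y
      obtain ⟨c, hc, hcz⟩ := H z
        ((convex_ball q r).segment_subset (Metric.mem_ball_self hr) hy hz)
      rw [hcz, hgq, huy, hlevel q hq, sub_self, real_inner_smul_left] at e
      have h0 : ⟪gradient u p, y - q⟫ = 0 := by
        rcases mul_eq_zero.1 e.symm with h | h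
        · exact absurd h hc.ne'
        · exact h
      have e2 : y - p = (y - q) + (q - p) := by abel
      rw [e2, inner_add_left, hq, real_inner_comm, h0, add_zero]
    obtain ⟨y, hyC, hy1, hy2⟩ := hC (interior {x | u x = u p → ⟪x - p, gradient u p⟫ = 0})
      ({x : EuclideanSpace ℝ (Fin N) | ⟪x - p, gradient u p⟫ = 0}ᶜ)
      isOpen_interior hclosed.isOpen_compl
      (fun y _ => by
        by_cases hy : ⟪y - p, gradient u p⟫ = 0
        · exact Or.inl (hint y hy)
        · exact Or.inr hy)
      ⟨p, mem_connectedComponentIn rfl, hint p hpP⟩ ⟨x, hx, hxP⟩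
    have hyl : u y = u p := connectedComponentIn_subset {x | u x = u p} p hyC
    have hy3 : u y = u p → ⟪y - p, gradient u p⟫ = 0 := interior_subset hy1
    exact hy2 (hy3 hyl)
  · exact hconv.isPreconnected.subset_connectedComponentIn hpP hlevel
  · intro x hx
    change gradient u x ≠ 0
    rw [hconst x hx]; exact hp
  · intro x hx
    rw [hconst x hx]; exact ⟨rfl, rfl⟩
end

section
/- Let f : ℝ → ℝ be continuously differentiable and let u : ℝ^N → ℝ be C³ with Δu + f(u) = 0 on ℝ^N and DV ≡ 0 on U = {x : ∇u(x) ≠ 0}, where V = ∇u/‖∇u‖. Let w ∈ ℝ^N with ‖w‖ = 1, p ∈ ℝ^N, γ(t) = p + t w, and h = u ∘ γ, and assume h is nonconstant on ℝ. Let (a, b) be a connected component of {t ∈ ℝ : γ(t) ∈ U}. Then the function t ↦ ⟨V(γ(t)), w⟩ is equal to a constant k on (a, b), k ≠ 0, h satisfies h''(t) + k² f(h(t)) = 0 for all t ∈ (a, b), and h is strictly monotone on (a, b). -/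
open RealInnerProductSpace MeasureTheory Filter

lemma aux_gradient_inner {N : ℕ} (u : EuclideanSpace ℝ (Fin N) → ℝ)
    (x z : EuclideanSpace ℝ (Fin N)) : fderiv ℝ u x z = ⟪gradient u x, z⟫ := by
  simp [gradient]

lemma aux_gradient_contDiff {N : ℕ} (u : EuclideanSpace ℝ (Fin N) → ℝ) (hu : ContDiff ℝ 3 u) :
    ContDiff ℝ 2 (gradient u) := by
  have h1 : ContDiff ℝ 2 (fderiv ℝ u) := hu.fderiv_right (by norm_num)
  exact (InnerProductSpace.toDual ℝ (EuclideanSpace ℝ (Fin N))).symm.contDiff.comp h1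

lemma aux_hess_symm {N : ℕ} (u : EuclideanSpace ℝ (Fin N) → ℝ) (hu : ContDiff ℝ 3 u)
    (x z₁ z₂ : EuclideanSpace ℝ (Fin N)) : Hess u x z₁ z₂ = Hess u x z₂ z₁ := by
  have h1 : ContDiff ℝ 2 (fderiv ℝ u) := hu.fderiv_right (by norm_num)
  have h2 : DifferentiableAt ℝ (fderiv ℝ u) x := (h1.differentiable (by norm_num)) x
  have hs : IsSymmSndFDerivAt ℝ u x :=
    (hu.contDiffAt).isSymmSndFDerivAt (by simp; norm_num)
  have key : ∀ z z', Hess u x z z' = fderiv ℝ (fderiv ℝ u) x z' z := by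
    intro z z'
    unfold Hess
    rw [fderiv_clm_apply h2 (differentiableAt_const z)]
    simp
  rw [key, key]
  exact hs.eq _ _

lemma aux_ngrad {N : ℕ} (u : EuclideanSpace ℝ (Fin N) → ℝ) (hu : ContDiff ℝ 3 u)
    (x : EuclideanSpace ℝ (Fin N)) (hx : gradient u x ≠ 0) :
    DifferentiableAt ℝ (NGrad u) x := by
  have hG : DifferentiableAt ℝ (gradient u) x :=
    ((aux_gradient_contDiff u hu).differentiable (by norm_num)) x
  have hn : DifferentiableAt ℝ (fun y => ‖gradient u y‖) x := hG.norm ℝ hx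
  exact (hn.inv (norm_ne_zero_iff.mpr hx)).smul hG

lemma aux_norm_smul {N : ℕ} (u : EuclideanSpace ℝ (Fin N) → ℝ) (x : EuclideanSpace ℝ (Fin N)) :
    gradient u x = ‖gradient u x‖ • NGrad u x := by
  unfold NGrad
  by_cases hx : gradient u x = 0
  · simp [hx]
  · rw [smul_smul, mul_inv_cancel₀ (norm_ne_zero_iff.mpr hx), one_smul]

lemma aux_main {N : ℕ} (u : EuclideanSpace ℝ (Fin N) → ℝ) (hu : ContDiff ℝ 3 u)
    (hDV : ∀ x, gradient u x ≠ 0 → fderiv ℝ (NGrad u) x = 0)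
    (x : EuclideanSpace ℝ (Fin N)) (hx : gradient u x ≠ 0) (z : EuclideanSpace ℝ (Fin N)) :
    fderiv ℝ (gradient u) x z = (Lap u x * ⟪NGrad u x, z⟫) • NGrad u x := by
  have hG : DifferentiableAt ℝ (gradient u) x :=
    ((aux_gradient_contDiff u hu).differentiable (by norm_num)) x
  have hn : DifferentiableAt ℝ (fun y => ‖gradient u y‖) x := hG.norm ℝ hx
  have hV := aux_ngrad u hu x hx
  set v := NGrad u x with hv
  have hv1 : ⟪v, v⟫ = 1 := by
    rw [real_inner_self_eq_norm_sq, hv, NGrad, norm_smul, norm_inv, norm_norm,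
      inv_mul_cancel₀ (norm_ne_zero_iff.mpr hx), one_pow]
  set L := fderiv ℝ (fun y => ‖gradient u y‖) x with hL
  have e1 : ∀ z, fderiv ℝ (gradient u) x z = L z • v := by
    intro z
    have : gradient u = fun y => ‖gradient u y‖ • NGrad u y := funext (aux_norm_smul u)
    have h2 := hn.hasFDerivAt.smul hV.hasFDerivAt
    have h3 : HasFDerivAt (gradient u) _ x := h2.congr_of_eventuallyEq
      (Filter.Eventually.of_forall (fun y => aux_norm_smul u y))
    rw [h3.fderiv, hDV x hx]
    simp [hL, hv]
  have e2 : ∀ z₁ z₂, Hess u x z₁ z₂ = L z₂ * ⟪v, z₁⟫ := by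
    intro z₁ z₂
    unfold Hess
    have : (fun y => fderiv ℝ u y z₁) = fun y => ⟪gradient u y, z₁⟫ :=
      funext (fun y => aux_gradient_inner u y z₁)
    rw [this, fderiv_inner_apply ℝ hG (differentiableAt_const z₁), e1]
    simp [inner_smul_left]
  have e3 : ∀ z, L z = L v * ⟪v, z⟫ := by
    intro z
    have := aux_hess_symm u hu x v z
    rw [e2, e2, hv1, mul_one] at this
    exact this
  have e4 : Lap u x = L v := by
    unfold Lap
    have : ∀ i : Fin N, Hess u x (EuclideanSpace.single i 1) (EuclideanSpace.single i 1)
        = L v * (v i * v i) := by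
      intro i
      rw [e2, e3]
      simp [EuclideanSpace.inner_single_right]
      ring
    rw [Finset.sum_congr rfl (fun i _ => this i), ← Finset.mul_sum]
    have h5 : ∑ i, v i * v i = 1 := by
      rw [← hv1, PiLp.inner_apply]; simp [pow_two]
    rw [h5, mul_one]
  rw [e1, e4, ← e3]

/-- flat-space instance of Lemma 3.5(a). Along the line
`γ(t) = p + t w` (`‖w‖ = 1`), on a connected component `(a, b)` (endpoints in
`ℝ ∪ {±∞}`, modelled by `EReal`) of `{t | γ(t) ∈ U}`, the quantity `⟨V(γ(t)), w⟩` is a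
nonzero constant `k`, the profile `h = u ∘ γ` solves `h'' + k² f(h) = 0` there, and `h`
is strictly monotone on `(a, b)`. -/
theorem statement12 {N : ℕ} (hN : 1 ≤ N) (f : ℝ → ℝ) (hf : ContDiff ℝ 1 f)
    (u : EuclideanSpace ℝ (Fin N) → ℝ) (hu : ContDiff ℝ 3 u)
    (hpde : ∀ x, Lap u x + f (u x) = 0)
    (hDV : ∀ x, gradient u x ≠ 0 → fderiv ℝ (NGrad u) x = 0)
    (w p : EuclideanSpace ℝ (Fin N)) (hw : ‖w‖ = 1)
    (γ : ℝ → EuclideanSpace ℝ (Fin N)) (hγ : γ = fun t => p + t • w)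
    (h : ℝ → ℝ) (hh : h = u ∘ γ)
    (hnc : ∃ s t, h s ≠ h t)
    (t₀ : ℝ) (ht₀ : gradient u (γ t₀) ≠ 0)
    (a b : EReal)
    (hcomp : connectedComponentIn {t : ℝ | gradient u (γ t) ≠ 0} t₀ =
      {t : ℝ | a < (t : EReal) ∧ (t : EReal) < b}) :
    ∃ k : ℝ, k ≠ 0 ∧
      (∀ t : ℝ, a < (t : EReal) → (t : EReal) < b → ⟪NGrad u (γ t), w⟫ = k) ∧
      (∀ t : ℝ, a < (t : EReal) → (t : EReal) < b →
        deriv (deriv h) t + k ^ 2 * f (h t) = 0) ∧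
      (StrictMonoOn h {t : ℝ | a < (t : EReal) ∧ (t : EReal) < b} ∨
        StrictAntiOn h {t : ℝ | a < (t : EReal) ∧ (t : EReal) < b}) := by
  set S : Set ℝ := {t : ℝ | gradient u (γ t) ≠ 0} with hS
  set C := connectedComponentIn S t₀ with hC
  have hGd := aux_gradient_contDiff u hu
  have hγd : ∀ t, HasDerivAt γ w t := by
    intro t
    rw [hγ]
    simpa using ((hasDerivAt_id t).smul_const w).const_add p
  have hγc : Continuous γ := continuous_iff_continuousAt.mpr fun t => (hγd t).continuousAt
  have hGc : Continuous (fun t => gradient u (γ t)) := hGd.continuous.comp hγc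
  have hSo : IsOpen S := isOpen_ne_fun hGc continuous_const
  have hCo : IsOpen C := hSo.connectedComponentIn
  have hCp : IsPreconnected C := isPreconnected_connectedComponentIn
  have hCS : C ⊆ S := connectedComponentIn_subset S t₀
  have ht₀C : t₀ ∈ C := mem_connectedComponentIn ht₀
  have hVd : ∀ t ∈ S, HasDerivAt (fun t => NGrad u (γ t)) 0 t := by
    intro t ht
    have := (aux_ngrad u hu (γ t) ht).hasFDerivAt.comp_hasDerivAt t (hγd t)
    rw [hDV _ ht] at this
    exact this
  have hGdt : ∀ t ∈ S, HasDerivAt (fun t => gradient u (γ t))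
      ((Lap u (γ t) * ⟪NGrad u (γ t), w⟫) • NGrad u (γ t)) t := by
    intro t ht
    have := ((hGd.differentiable (by norm_num)) (γ t)).hasFDerivAt.comp_hasDerivAt t (hγd t)
    rw [aux_main u hu hDV _ ht] at this
    exact this
  have hhd : ∀ t, HasDerivAt h ⟪gradient u (γ t), w⟫ t := by
    intro t
    have := ((hu.differentiable (by norm_num)) (γ t)).hasFDerivAt.comp_hasDerivAt t (hγd t)
    rw [aux_gradient_inner] at this
    rw [hh]; exact this
  have hdh : deriv h = fun t => ⟪gradient u (γ t), w⟫ := funext fun t => (hhd t).deriv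
  have hVc : ∀ t ∈ C, NGrad u (γ t) = NGrad u (γ t₀) := by
    intro t ht
    exact hCo.is_const_of_deriv_eq_zero hCp
      (fun s hs => (hVd s (hCS hs)).differentiableAt.differentiableWithinAt)
      (fun s hs => (hVd s (hCS hs)).deriv) ht ht₀C
  obtain ⟨k, hk⟩ : ∃ k, k = ⟪NGrad u (γ t₀), w⟫ := ⟨_, rfl⟩
  have hgk : ∀ t ∈ C, ⟪gradient u (γ t), w⟫ = ‖gradient u (γ t)‖ * k := by
    intro t ht
    conv_lhs => rw [aux_norm_smul u (γ t), hVc t ht, real_inner_smul_left, ← hk]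
  have hk0 : k ≠ 0 := by
    intro hk0
    have hconst : ∀ t ∈ C, gradient u (γ t) = gradient u (γ t₀) := by
      intro t ht
      refine hCo.is_const_of_deriv_eq_zero (f := fun t => gradient u (γ t)) hCp
        (fun s hs => (hGdt s (hCS hs)).differentiableAt.differentiableWithinAt)
        (fun s hs => ?_) ht ht₀C
      rw [(hGdt s (hCS hs)).deriv, hVc s hs, ← hk, hk0]
      simp
    have hcl : closure C ⊆ S := by
      have hcc : closure C ⊆ {t | gradient u (γ t) = gradient u (γ t₀)} :=
        closure_minimal hconst (isClosed_eq hGc continuous_const)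
      intro t ht
      have := hcc ht
      simp only [Set.mem_setOf_eq] at this
      simp only [hS, Set.mem_setOf_eq, this]
      exact ht₀
    have hclC : closure C ⊆ C :=
      hCp.closure.subset_connectedComponentIn (subset_closure ht₀C) hcl
    have huniv : C = Set.univ :=
      IsClopen.eq_univ ⟨isClosed_of_closure_subset hclC, hCo⟩ ⟨t₀, ht₀C⟩
    obtain ⟨s, t, hst⟩ := hnc
    apply hst
    apply is_const_of_deriv_eq_zero (fun t => (hhd t).differentiableAt)
    intro r
    rw [(hhd r).deriv, hgk r (by rw [huniv]; trivial), hk0, mul_zero]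
  have hmem : ∀ t : ℝ, a < (t : EReal) → (t : EReal) < b → t ∈ C := by
    intro t h1 h2
    rw [hcomp]; exact ⟨h1, h2⟩
  refine ⟨k, hk0, ?_, ?_, ?_⟩
  · intro t h1 h2
    rw [hVc t (hmem t h1 h2), hk]
  · intro t h1 h2
    have ht := hmem t h1 h2
    have h3 := (hGdt t (hCS ht)).inner ℝ (hasDerivAt_const t w)
    rw [hdh, h3.deriv, hVc t ht, real_inner_smul_left, ← hk, inner_zero_right]
    have h4 := hpde (γ t)
    have h5 : h t = u (γ t) := by rw [hh]; rfl
    rw [h5]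
    linear_combination k ^ 2 * h4
  · rw [← hcomp]
    have hcv : Convex ℝ C := hCp.ordConnected.convex
    have hcont : ContinuousOn h C := fun t _ => (hhd t).continuousAt.continuousWithinAt
    have hpos : ∀ t ∈ C, 0 < ‖gradient u (γ t)‖ := fun t ht => norm_pos_iff.mpr (hCS ht)
    rcases lt_or_gt_of_ne hk0 with hneg | hp
    · right
      apply strictAntiOn_of_deriv_neg hcv hcont
      intro t ht
      have ht := interior_subset ht
      rw [(hhd t).deriv, hgk t ht]
      exact mul_neg_of_pos_of_neg (hpos t ht) hneg
    · left
      apply strictMonoOn_of_deriv_pos hcv hcont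
      intro t ht
      have ht := interior_subset ht
      rw [(hhd t).deriv, hgk t ht]
      exact mul_pos (hpos t ht) hp
end

section
/- Let f : ℝ → ℝ be continuously differentiable and let u : ℝ^N → ℝ be C³ with Δu + f(u) = 0 on ℝ^N and DV ≡ 0 on U = {x : ∇u(x) ≠ 0}, where V = ∇u/‖∇u‖. Let w ∈ ℝ^N with ‖w‖ = 1, p ∈ ℝ^N, γ(t) = p + t w, and h = u ∘ γ, and assume h is nonconstant on ℝ. Let (a, b) be a connected component of {t ∈ ℝ : γ(t) ∈ U} with a ∈ ℝ finite, and set r = b − a ∈ (0, +∞]. Then h(a + s) = h(a − s) for all s ∈ ℝ, and the interval (a − r, a) is also a connected component of {t ∈ ℝ : γ(t) ∈ U}. -/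
open RealInnerProductSpace MeasureTheory Filter

section helpers

variable {E : Type*} [NormedAddCommGroup E] [InnerProductSpace ℝ E]

open Set Topology

/-- Uniqueness for autonomous `C¹` planar systems, on a closed interval. -/
lemma ode_unique {F : ℝ × ℝ → ℝ × ℝ} (hF : ContDiff ℝ 1 F) {z₁ z₂ : ℝ → ℝ × ℝ} {A B t₁ : ℝ}
    (h₁ : ∀ t ∈ Icc A B, HasDerivAt z₁ (F (z₁ t)) t)
    (h₂ : ∀ t ∈ Icc A B, HasDerivAt z₂ (F (z₂ t)) t)
    (ht : t₁ ∈ Icc A B) (heq : z₁ t₁ = z₂ t₁) : EqOn z₁ z₂ (Icc A B) := by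
  have c₁ : ContinuousOn z₁ (Icc A B) := fun t ht => (h₁ t ht).continuousAt.continuousWithinAt
  have c₂ : ContinuousOn z₂ (Icc A B) := fun t ht => (h₂ t ht).continuousAt.continuousWithinAt
  obtain ⟨K, hK⟩ := LocallyLipschitzOn.exists_lipschitzOnWith_of_compact
    ((isCompact_Icc.image_of_continuousOn c₁).union (isCompact_Icc.image_of_continuousOn c₂))
    (hF.locallyLipschitz.locallyLipschitzOn)
  rw [← Icc_union_Icc_eq_Icc ht.1 ht.2]
  apply EqOn.union
  · have hs : Icc A t₁ ⊆ Icc A B := Icc_subset_Icc_right ht.2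
    have hs' : Ioc A t₁ ⊆ Icc A B := Ioc_subset_Icc_self.trans hs
    exact ODE_solution_unique_of_mem_Icc_left (v := fun _ => F) (fun t _ => hK)
      (c₁.mono hs) (fun t ht => (h₁ t (hs' ht)).hasDerivWithinAt)
      (fun t ht => Or.inl ⟨t, hs' ht, rfl⟩)
      (c₂.mono hs) (fun t ht => (h₂ t (hs' ht)).hasDerivWithinAt)
      (fun t ht => Or.inr ⟨t, hs' ht, rfl⟩) heq
  · have hs : Icc t₁ B ⊆ Icc A B := Icc_subset_Icc_left ht.1
    have hs' : Ico t₁ B ⊆ Icc A B := Ico_subset_Icc_self.trans hs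
    exact ODE_solution_unique_of_mem_Icc_right (v := fun _ => F) (fun t _ => hK)
      (c₁.mono hs) (fun t ht => (h₁ t (hs' ht)).hasDerivWithinAt)
      (fun t ht => Or.inl ⟨t, hs' ht, rfl⟩)
      (c₂.mono hs) (fun t ht => (h₂ t (hs' ht)).hasDerivWithinAt)
      (fun t ht => Or.inr ⟨t, hs' ht, rfl⟩) heq

lemma parallel_unit {e v : E} (he : ‖e‖ = 1) (hv : ‖v‖ = 1) (h : v = ⟪e, v⟫ • e) :
    e = v ∨ e = -v := by
  have h1 : |⟪e, v⟫| = 1 := by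
    have := congrArg norm h
    rw [norm_smul, he, hv, mul_one, Real.norm_eq_abs] at this
    exact this.symm
  rcases (abs_eq zero_le_one).1 h1 with h2 | h2
  · left; rw [h2, one_smul] at h; exact h.symm
  · right; rw [h2, neg_one_smul] at h; rw [h, neg_neg]

/-- One-dimensional core. -/
lemma core {f : ℝ → ℝ} (hf : ContDiff ℝ 1 f) {w : E} {X X' : ℝ → E} {h : ℝ → ℝ}
    (hX : ∀ t, HasDerivAt X (X' t) t) (hXderc : Continuous X')
    (hh : ∀ t, HasDerivAt h ⟪X t, w⟫ t)
    (hV : ∀ t, X t ≠ 0 → HasDerivAt (fun s => ‖X s‖⁻¹ • X s) 0 t)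
    (hX' : ∀ t, X t ≠ 0 →
      X' t = (-(f (h t)) * ⟪‖X t‖⁻¹ • X t, w⟫) • (‖X t‖⁻¹ • X t))
    {t₀ : ℝ} (ht₀ : X t₀ ≠ 0) {a : ℝ} (ha : X a = 0) :
    ∀ t, h (2 * a - t) = h t ∧ (X (2 * a - t) = 0 ↔ X t = 0) := by
  have hXc : Continuous X := continuous_iff_continuousAt.2 fun t => (hX t).continuousAt
  have hhc : Continuous h := continuous_iff_continuousAt.2 fun t => (hh t).continuousAt
  set V : ℝ → E := fun s => ‖X s‖⁻¹ • X s with hVdef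
  have hVn : ∀ t, X t ≠ 0 → ‖V t‖ = 1 := fun t ht => by
    simp only [hVdef]
    rw [norm_smul, norm_inv, norm_norm, inv_mul_cancel₀ (norm_ne_zero_iff.2 ht)]
  have hXV : ∀ t, X t = ‖X t‖ • V t := fun t => by
    by_cases ht : X t = 0
    · simp [ht]
    · simp only [hVdef]
      rw [smul_smul, mul_inv_cancel₀ (norm_ne_zero_iff.2 ht), one_smul]
  have hVconst : ∀ s₁ s₂ : ℝ, (∀ t ∈ Ioo s₁ s₂, X t ≠ 0) →
      ∀ t ∈ Ioo s₁ s₂, ∀ s ∈ Ioo s₁ s₂, V t = V s := by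
    intro s₁ s₂ hI t ht s hs
    exact isOpen_Ioo.is_const_of_deriv_eq_zero isPreconnected_Ioo
      (fun r hr => (hV r (hI r hr)).differentiableAt.differentiableWithinAt)
      (fun r hr => (hV r (hI r hr)).deriv) ht hs
  set v := V t₀ with hv
  have hvn : ‖v‖ = 1 := hVn _ ht₀
  have hvv : ⟪v, v⟫ = 1 := by rw [real_inner_self_eq_norm_sq, hvn]; norm_num
  set c := ⟪v, w⟫ with hc
  let T : Set ℝ := {t | X t = ⟪v, X t⟫ • v ∧ X' t = (-(f (h t)) * c) • v}
  have hTc : IsClosed T := by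
    have hfc := hf.continuous
    apply IsClosed.inter
    · exact isClosed_eq hXc (by fun_prop)
    · exact isClosed_eq hXderc (by fun_prop)
  have hpm : ∀ t, X t ≠ 0 → (V t = v ∨ V t = -v) → t ∈ T := by
    intro t ht hvt
    have e1 := hXV t
    have e2 := hX' t ht
    change X' t = (-(f (h t)) * ⟪V t, w⟫) • V t at e2
    rcases hvt with hvt | hvt
    · rw [hvt] at e1 e2
      refine ⟨?_, e2⟩
      rw [e1, inner_smul_right, hvv, mul_one]
    · rw [hvt] at e1 e2
      refine ⟨?_, ?_⟩
      · rw [e1, inner_smul_right, inner_neg_right, hvv]; simp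
      · rw [e2, inner_neg_left, ← hc]; simp
  have hTpm : ∀ t ∈ T, X t ≠ 0 → (V t = v ∨ V t = -v) := by
    intro t htT ht
    have h1 := htT.1
    have h2 : V t = ⟪v, V t⟫ • v := by
      simp only [hVdef, inner_smul_right]
      rw [mul_smul, ← h1]
    rcases parallel_unit hvn (hVn t ht) h2 with h3 | h3
    · exact Or.inl h3.symm
    · right; rw [h3, neg_neg]
  -- side lemma
  have hside : ∀ t ∈ T, X t = 0 → f (h t) * c ≠ 0 → ∀ s₁ s₂ : ℝ, (∀ r ∈ Ioo s₁ s₂, X r ≠ 0) →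
      t ∈ closure (Ioo s₁ s₂) → t ∉ Ioo s₁ s₂ → Ioo s₁ s₂ ⊆ T := by
    intro t htT ht hfc s₁ s₂ hI htcl htn r hr
    apply hpm r (hI r hr)
    have hd : HasDerivWithinAt X (X' t) (Ioo s₁ s₂) t := (hX t).hasDerivWithinAt
    rw [hasDerivWithinAt_iff_tendsto_slope' htn] at hd
    have : (𝓝[Ioo s₁ s₂] t).NeBot := mem_closure_iff_nhdsWithin_neBot.1 htcl
    have hen : ‖V r‖ = 1 := hVn r (hI r hr)
    have hee : ⟪V r, V r⟫ = 1 := by rw [real_inner_self_eq_norm_sq, hen]; norm_num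
    have key : X' t = ⟪V r, X' t⟫ • V r := by
      have hcont : Continuous fun y : E => ⟪V r, y⟫ • V r := by fun_prop
      have h2 := (hcont.tendsto (X' t)).comp hd
      refine tendsto_nhds_unique (hd.congr' ?_) h2
      filter_upwards [self_mem_nhdsWithin] with s hs
      have h3 : X s = ‖X s‖ • V r := by rw [hVconst s₁ s₂ hI r hr s hs]; exact hXV s
      simp only [Function.comp, slope, ht, vsub_eq_sub, sub_zero]
      rw [h3]
      simp only [inner_smul_right, hee, smul_smul, mul_one]
    rw [htT.2, inner_smul_right, mul_smul (-(f (h t)) * c) ⟪V r, v⟫] at key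
    have hne : -(f (h t)) * c ≠ 0 := by simpa using hfc
    exact parallel_unit hen hvn (smul_right_injective E hne key)
  -- the system
  let F : ℝ × ℝ → ℝ × ℝ := fun z => (c * z.2, -(f z.1) * c)
  have hF : ContDiff ℝ 1 F := by
    have : ContDiff ℝ 1 (fun z : ℝ × ℝ => f z.1) := hf.comp contDiff_fst
    exact (contDiff_const.mul contDiff_snd).prodMk (this.neg.mul contDiff_const)
  let z : ℝ → ℝ × ℝ := fun t => (h t, ⟪v, X t⟫)
  have hz : ∀ t ∈ T, HasDerivAt z (F (z t)) t := by
    intro t ht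
    have h1 : HasDerivAt h (c * ⟪v, X t⟫) t := by
      have := hh t
      rw [ht.1, inner_smul_left, ← hc] at this
      simpa [mul_comm] using this
    have h2 : HasDerivAt (fun s => ⟪v, X s⟫) (-(f (h t)) * c) t := by
      have := (hasDerivAt_const t v).inner ℝ (hX t)
      rw [ht.2, inner_smul_right, hvv] at this
      simpa using this
    exact h1.prodMk h2
  have ht₀T : t₀ ∈ T := hpm t₀ ht₀ (Or.inl rfl)
  have hz0 : ∀ t ∈ T, X t = 0 ↔ ⟪v, X t⟫ = 0 := by
    intro t ht
    constructor
    · intro h; rw [h, inner_zero_right]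
    · intro h; rw [ht.1, h, zero_smul]
  set C := connectedComponentIn T t₀ with hC
  have hCT : C ⊆ T := connectedComponentIn_subset _ _
  have hCp : IsPreconnected C := isPreconnected_connectedComponentIn
  have ht₀C : t₀ ∈ C := mem_connectedComponentIn ht₀T
  have hCcl : IsClosed C := by
    refine isClosed_of_closure_subset ?_
    exact hCp.closure.subset_connectedComponentIn (subset_closure ht₀C)
      (closure_minimal hCT hTc)
  have hnd : ∀ t ∈ C, X t = 0 → f (h t) * c ≠ 0 := by
    intro t ht hXt h0
    have hsub : uIcc t₀ t ⊆ T := (hCp.ordConnected.uIcc_subset ht₀C ht).trans hCT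
    have hy : ⟪v, X t⟫ = 0 := (hz0 t (hCT ht)).1 hXt
    have := ode_unique hF (z₁ := z) (z₂ := fun _ => z t) (A := min t₀ t) (B := max t₀ t) (t₁ := t)
      (fun s hs => hz s (hsub hs))
      (fun s _ => by
        have e : F (z t) = 0 := by
          simp only [F, z, hy, mul_zero, neg_mul, h0, neg_zero]; rfl
        rw [e]; exact hasDerivAt_const s (z t)) right_mem_uIcc rfl
    have h3 := congrArg Prod.snd (this (left_mem_uIcc : t₀ ∈ uIcc t₀ t))
    exact ht₀ ((hz0 t₀ ht₀T).2 (h3.trans hy))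
  have hCop : IsOpen C := by
    rw [isOpen_iff_mem_nhds]
    intro t ht
    rw [hC, connectedComponentIn_eq ht]
    apply connectedComponentIn_mem_nhds
    by_cases hXt : X t = 0
    · have hfc := hnd t ht hXt
      have hXdert : X' t ≠ 0 := by
        rw [(hCT ht).2]
        refine smul_ne_zero (by simpa using hfc) ?_
        intro h; rw [h, norm_zero] at hvn; exact zero_ne_one hvn
      have hev : ∀ᶠ s in 𝓝[≠] t, X s ≠ 0 := (hX t).eventually_ne hXdert
      rw [eventually_nhdsWithin_iff, Metric.eventually_nhds_iff] at hev
      obtain ⟨ε, hε, hev⟩ := hev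
      have hL := hside t (hCT ht) hXt hfc (t - ε) t
        (fun r hr => hev (by rw [Real.dist_eq, abs_lt]; constructor <;> linarith [hr.1, hr.2])
          (ne_of_lt hr.2))
        (by rw [closure_Ioo (by linarith)]; exact ⟨by linarith, le_rfl⟩) (fun h => lt_irrefl _ h.2)
      have hR := hside t (hCT ht) hXt hfc t (t + ε)
        (fun r hr => hev (by rw [Real.dist_eq, abs_lt]; constructor <;> linarith [hr.1, hr.2])
          (ne_of_gt hr.1))
        (by rw [closure_Ioo (by linarith)]; exact ⟨le_rfl, by linarith⟩) (fun h => lt_irrefl _ h.1)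
      refine mem_of_superset (Ioo_mem_nhds (by linarith : t - ε < t) (by linarith : t < t + ε)) ?_
      intro s hs
      rcases lt_trichotomy s t with h | h | h
      · exact hL ⟨hs.1, h⟩
      · rw [h]; exact hCT ht
      · exact hR ⟨h, hs.2⟩
    · have hev : ∀ᶠ s in 𝓝 t, X s ≠ 0 := hXc.continuousAt.eventually_ne hXt
      rw [Metric.eventually_nhds_iff] at hev
      obtain ⟨ε, hε, hev⟩ := hev
      have hI : ∀ r ∈ Ioo (t - ε) (t + ε), X r ≠ 0 := fun r hr =>
        hev (by rw [Real.dist_eq, abs_lt]; constructor <;> linarith [hr.1, hr.2])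
      refine mem_of_superset (Ioo_mem_nhds (by linarith : t - ε < t) (by linarith : t < t + ε)) ?_
      intro s hs
      apply hpm s (hI s hs)
      rw [hVconst _ _ hI s hs t ⟨by linarith, by linarith⟩]
      exact hTpm t (hCT ht) hXt
  have hCu : C = univ := IsClopen.eq_univ ⟨hCcl, hCop⟩ ⟨t₀, ht₀C⟩
  have hT : ∀ t, t ∈ T := fun t => hCT (hCu ▸ mem_univ t)
  let z' : ℝ → ℝ × ℝ := fun t => (h (2 * a - t), -⟪v, X (2 * a - t)⟫)
  have hz' : ∀ t, HasDerivAt z' (F (z' t)) t := by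
    intro t
    have h0 := (hz _ (hT (2 * a - t))).scomp t ((hasDerivAt_id t).const_sub (2 * a))
    let L : ℝ × ℝ →L[ℝ] ℝ × ℝ :=
      (ContinuousLinearMap.fst ℝ ℝ ℝ).prod (-ContinuousLinearMap.snd ℝ ℝ ℝ)
    have h1 : HasDerivAt z' (L ((-1 : ℝ) • F (z (2 * a - t)))) t :=
      L.hasFDerivAt.comp_hasDerivAt t h0
    have h2 : L ((-1 : ℝ) • F (z (2 * a - t))) = F (z' t) := by
      simp [F, z', z, L]
    rw [← h2]; exact h1
  intro t
  have key := ode_unique hF (z₁ := z') (z₂ := z) (A := min a t) (B := max a t) (t₁ := a)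
    (fun s _ => hz' s) (fun s _ => hz s (hT s)) left_mem_uIcc
    (by simp [z, z', two_mul, ha]) (right_mem_uIcc : t ∈ uIcc a t)
  refine ⟨congrArg Prod.fst key, ?_⟩
  have h2 : -⟪v, X (2 * a - t)⟫ = ⟪v, X t⟫ := congrArg Prod.snd key
  rw [hz0 _ (hT _), hz0 _ (hT t), ← h2, neg_eq_zero]

end helpers

lemma hess_struct {N : ℕ} (f : ℝ → ℝ)
    (u : EuclideanSpace ℝ (Fin N) → ℝ) (hu : ContDiff ℝ 3 u)
    (hpde : ∀ x, Lap u x + f (u x) = 0)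
    (hg : ContDiff ℝ 2 (gradient u))
    (x : EuclideanSpace ℝ (Fin N)) (hx : gradient u x ≠ 0)
    (hV : HasFDerivAt (NGrad u) (0 : EuclideanSpace ℝ (Fin N) →L[ℝ] EuclideanSpace ℝ (Fin N)) x)
    (y : EuclideanSpace ℝ (Fin N)) :
    fderiv ℝ (gradient u) x y = (-(f (u x)) * ⟪NGrad u x, y⟫) • NGrad u x := by
  have hgd : Differentiable ℝ (gradient u) := hg.differentiable (by norm_num)
  have hVn : ‖NGrad u x‖ = 1 := by
    rw [NGrad, norm_smul, norm_inv, norm_norm, inv_mul_cancel₀ (norm_ne_zero_iff.2 hx)]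
  have hVV : ⟪NGrad u x, NGrad u x⟫ = 1 := by rw [real_inner_self_eq_norm_sq, hVn]; norm_num
  have hnd : DifferentiableAt ℝ (fun y => ‖gradient u y‖) x := (hgd x).norm ℝ hx
  set L := fderiv ℝ (fun y => ‖gradient u y‖) x with hL
  have hgV : gradient u = fun y => ‖gradient u y‖ • NGrad u y := by
    funext y
    by_cases h : gradient u y = 0
    · simp [h]
    · rw [NGrad, smul_smul, mul_inv_cancel₀ (norm_ne_zero_iff.2 h), one_smul]
  have h1 : ∀ z, fderiv ℝ (gradient u) x z = L z • NGrad u x := by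
    intro z
    have := (hnd.hasFDerivAt.smul hV)
    have h2 : HasFDerivAt (gradient u) _ x := this.congr_of_eventuallyEq (by
      exact Filter.Eventually.of_forall fun y => congrFun hgV y)
    rw [h2.fderiv]
    simp [hL]
  have hfg : ∀ z₁ z₂, ⟪fderiv ℝ (gradient u) x z₁, z₂⟫ = Hess u x z₂ z₁ := by
    intro z₁ z₂
    have e : (fun y => fderiv ℝ u y z₂) = fun y => ⟪gradient u y, z₂⟫ := by
      funext y; rw [inner_gradient_left]
    rw [Hess, e, fderiv_inner_apply ℝ (hgd x) (differentiableAt_const _)]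
    simp
  have hsymm : ∀ z₁ z₂, Hess u x z₁ z₂ = Hess u x z₂ z₁ := by
    intro z₁ z₂
    have hs : IsSymmSndFDerivAt ℝ u x := hu.contDiffAt.isSymmSndFDerivAt (by simp; norm_num)
    have hd : DifferentiableAt ℝ (fderiv ℝ u) x :=
      ((hu.fderiv_right (m := 2) (by norm_num)).differentiable (by norm_num)) x
    have e : ∀ z₁ z₂, Hess u x z₁ z₂ = fderiv ℝ (fderiv ℝ u) x z₂ z₁ := by
      intro z₁ z₂
      rw [Hess, fderiv_clm_apply hd (differentiableAt_const _)]
      simp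
    rw [e, e]; exact hs.eq _ _
  have h2 : ∀ z, L z = L (NGrad u x) * ⟪NGrad u x, z⟫ := by
    intro z
    have a1 := hfg z (NGrad u x)
    have a2 := hfg (NGrad u x) z
    rw [hsymm, ← a1, h1, h1, inner_smul_left, inner_smul_left, hVV] at a2
    simpa using a2.symm
  have h3 : Lap u x = L (NGrad u x) := by
    rw [Lap]
    have : ∀ i : Fin N, Hess u x (EuclideanSpace.single i 1) (EuclideanSpace.single i 1)
        = L (NGrad u x) * (NGrad u x i) ^ 2 := by
      intro i
      rw [← hfg, h1, h2, inner_smul_left, EuclideanSpace.inner_single_right]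
      simp; ring
    rw [Finset.sum_congr rfl fun i _ => this i, ← Finset.mul_sum,
      ← EuclideanSpace.real_norm_sq_eq, hVn]
    ring
  rw [h1, h2, ← h3, eq_neg_of_add_eq_zero_left (hpde x)]

/-- flat-space instance of Lemma 3.5(c). -/
theorem statement14 {N : ℕ} (hN : 1 ≤ N) (f : ℝ → ℝ) (hf : ContDiff ℝ 1 f)
    (u : EuclideanSpace ℝ (Fin N) → ℝ) (hu : ContDiff ℝ 3 u)
    (hpde : ∀ x, Lap u x + f (u x) = 0)
    (hDV : ∀ x, gradient u x ≠ 0 → fderiv ℝ (NGrad u) x = 0)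
    (w p : EuclideanSpace ℝ (Fin N)) (hw : ‖w‖ = 1)
    (γ : ℝ → EuclideanSpace ℝ (Fin N)) (hγ : γ = fun t => p + t • w)
    (h : ℝ → ℝ) (hh : h = u ∘ γ)
    (hnc : ∃ s t, h s ≠ h t)
    (t₀ : ℝ) (ht₀ : gradient u (γ t₀) ≠ 0)
    (a : ℝ) (b : EReal) (hab : (a : EReal) < b)
    (hcomp : connectedComponentIn {t : ℝ | gradient u (γ t) ≠ 0} t₀ =
      {t : ℝ | (a : EReal) < (t : EReal) ∧ (t : EReal) < b}) :
    (∀ s : ℝ, h (a + s) = h (a - s)) ∧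
      ∃ t₁ : ℝ, ((a : EReal) - (b - (a : EReal)) < (t₁ : EReal) ∧ (t₁ : EReal) < (a : EReal)) ∧
        connectedComponentIn {t : ℝ | gradient u (γ t) ≠ 0} t₁ =
          {t : ℝ | (a : EReal) - (b - (a : EReal)) < (t : EReal) ∧
            (t : EReal) < (a : EReal)} := by
  have hg : ContDiff ℝ 2 (gradient u) := by
    have h1 : ContDiff ℝ 2 (fderiv ℝ u) := hu.fderiv_right (by norm_num)
    exact (InnerProductSpace.toDual ℝ (EuclideanSpace ℝ (Fin N))).symm.contDiff.comp h1
  have hgd : Differentiable ℝ (gradient u) := hg.differentiable (by norm_num)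
  have hγd : ∀ t, HasDerivAt γ w t := by
    intro t
    rw [hγ]
    simpa using ((hasDerivAt_id t).smul_const w).const_add p
  have hγc : Continuous γ := continuous_iff_continuousAt.2 fun t => (hγd t).continuousAt
  have hVd : ∀ x, gradient u x ≠ 0 → HasFDerivAt (NGrad u)
      (0 : EuclideanSpace ℝ (Fin N) →L[ℝ] EuclideanSpace ℝ (Fin N)) x := by
    intro x hx
    have : DifferentiableAt ℝ (NGrad u) x :=
      (((hgd x).norm ℝ hx).inv (norm_ne_zero_iff.2 hx)).smul (hgd x)
    rw [← hDV x hx]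
    exact this.hasFDerivAt
  have hXc : Continuous fun t => gradient u (γ t) := hg.continuous.comp hγc
  have ht₀m : t₀ ∈ {t : ℝ | (a : EReal) < (t : EReal) ∧ (t : EReal) < b} := by
    rw [← hcomp]; exact mem_connectedComponentIn ht₀
  have ha : gradient u (γ a) = 0 := by
    by_contra hne
    have hoc : Set.OrdConnected {t : ℝ | (a : EReal) ≤ (t : EReal) ∧ (t : EReal) < b} := by
      constructor
      intro x hx y hy z hz
      exact ⟨hx.1.trans (EReal.coe_le_coe_iff.2 hz.1), (EReal.coe_le_coe_iff.2 hz.2).trans_lt hy.2⟩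
    have hsub := hoc.isPreconnected.subset_connectedComponentIn
      (F := {t : ℝ | gradient u (γ t) ≠ 0}) (x := t₀) ⟨ht₀m.1.le, ht₀m.2⟩ (by
        intro t ht
        rcases ht.1.eq_or_lt with h | h
        · rw [EReal.coe_eq_coe_iff] at h
          rw [← h]; exact hne
        · have : t ∈ connectedComponentIn {t : ℝ | gradient u (γ t) ≠ 0} t₀ := by
            rw [hcomp]; exact ⟨h, ht.2⟩
          exact connectedComponentIn_subset _ _ this)
    have : a ∈ connectedComponentIn {t : ℝ | gradient u (γ t) ≠ 0} t₀ := hsub ⟨le_rfl, hab⟩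
    rw [hcomp] at this
    exact lt_irrefl _ this.1
  have key := core hf (w := w) (X := fun t => gradient u (γ t))
    (X' := fun t => fderiv ℝ (gradient u) (γ t) w) (h := h)
    (fun t => (hgd (γ t)).hasFDerivAt.comp_hasDerivAt t (hγd t))
    (((hg.continuous_fderiv (by norm_num)).comp hγc).clm_apply continuous_const)
    (fun t => by
      rw [hh, inner_gradient_left]
      exact ((hu.differentiable (by norm_num)) (γ t)).hasFDerivAt.comp_hasDerivAt t (hγd t))
    (fun t ht => by
      have h1 := (hVd (γ t) ht).comp_hasDerivAt t (hγd t)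
      have h2 : HasDerivAt (NGrad u ∘ γ) 0 t := by simpa using h1
      exact h2)
    (fun t ht => by
      rw [hh]
      exact hess_struct f u hu hpde hg (γ t) ht (hVd _ ht) w)
    ht₀ ha
  refine ⟨fun s => ?_, 2 * a - t₀, ?_⟩
  · rw [← (key (a + s)).1]; congr 1; ring
  have hset : ∀ t : ℝ, ((a : EReal) - (b - (a : EReal)) < (t : EReal) ∧ (t : EReal) < (a : EReal))
      ↔ ((a : EReal) < ((2 * a - t : ℝ) : EReal) ∧ ((2 * a - t : ℝ) : EReal) < b) := by
    intro t
    induction b using EReal.rec with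
    | bot => exact absurd hab (by simp)
    | coe b =>
      norm_cast
      constructor <;> rintro ⟨h1, h2⟩ <;> constructor <;> linarith
    | top =>
      have e : (a : EReal) - (⊤ - (a : EReal)) = ⊥ := by
        rw [EReal.top_sub_coe, EReal.sub_top]
      rw [e]
      simp only [EReal.bot_lt_coe, EReal.coe_lt_top, true_and, and_true, EReal.coe_lt_coe_iff]
      constructor <;> intro <;> linarith
  refine ⟨(hset _).2 (by simpa using ht₀m), ?_⟩
  have himg : ∀ S : Set ℝ, (Homeomorph.subLeft (2 * a)) '' S = {t | 2 * a - t ∈ S} := by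
    intro S
    ext t
    constructor
    · rintro ⟨s, hs, rfl⟩
      simpa using hs
    · intro ht
      exact ⟨2 * a - t, ht, by simp⟩
  have := (Homeomorph.subLeft (2 * a)).image_connectedComponentIn
    (s := {t : ℝ | gradient u (γ t) ≠ 0}) (x := t₀) ht₀
  rw [hcomp, himg, himg] at this
  have e1 : {t | 2 * a - t ∈ {t : ℝ | gradient u (γ t) ≠ 0}} = {t : ℝ | gradient u (γ t) ≠ 0} := by
    ext t
    exact not_congr (key t).2
  rw [e1] at this
  refine Eq.trans this.symm ?_
  ext t
  exact (hset t).symm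
end

section
/- Let f : ℝ → ℝ be continuously differentiable and let u : ℝ^N → ℝ be a nonconstant C³ function with Δu + f(u) = 0 on ℝ^N and DV ≡ 0 on U = {x : ∇u(x) ≠ 0}, where V = ∇u/‖∇u‖. Let U₀ be a connected component of U. Then V is constant on U₀, equal to some unit vector e ∈ ℝ^N, and there exist a < b in ℝ ∪ {−∞, +∞} and a C² function h : (a, b) → ℝ with h' > 0 on (a, b) such that U₀ = {x ∈ ℝ^N : a < ⟨x, e⟩ < b} and u(x) = h(⟨x, e⟩) for all x ∈ U₀. -/
open RealInnerProductSpace MeasureTheory Filter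

/-- flat-space instance of Lemma 3.7. If `u` is a nonconstant `C³`
solution of `Δu + f(u) = 0` with `DV ≡ 0` on `U = {∇u ≠ 0}`, then on any connected
component `U₀` of `U` the normalized gradient `V` is a constant unit vector `e`, `U₀` is
the open slab `{a < ⟨x, e⟩ < b}` for some `a < b` in `ℝ ∪ {±∞}`, and `u(x) = h(⟨x, e⟩)`
on `U₀` for a `C²` profile `h` with `h' > 0`. -/
theorem statement15 {N : ℕ} (hN : 1 ≤ N) (f : ℝ → ℝ) (hf : ContDiff ℝ 1 f)
    (u : EuclideanSpace ℝ (Fin N) → ℝ) (hu : ContDiff ℝ 3 u)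
    (hnc : ∃ x y, u x ≠ u y)
    (hpde : ∀ x, Lap u x + f (u x) = 0)
    (hDV : ∀ x, gradient u x ≠ 0 → fderiv ℝ (NGrad u) x = 0)
    (x₀ : EuclideanSpace ℝ (Fin N)) (hx₀ : gradient u x₀ ≠ 0)
    (U₀ : Set (EuclideanSpace ℝ (Fin N)))
    (hU₀ : U₀ = connectedComponentIn {x | gradient u x ≠ 0} x₀) :
    ∃ e : EuclideanSpace ℝ (Fin N), ‖e‖ = 1 ∧ (∀ x ∈ U₀, NGrad u x = e) ∧
      ∃ a b : EReal, a < b ∧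
        U₀ = {x : EuclideanSpace ℝ (Fin N) |
          a < ((⟪x, e⟫ : ℝ) : EReal) ∧ ((⟪x, e⟫ : ℝ) : EReal) < b} ∧
        ∃ h : ℝ → ℝ,
          ContDiffOn ℝ 2 h {s : ℝ | a < (s : EReal) ∧ (s : EReal) < b} ∧
          (∀ s : ℝ, a < (s : EReal) → (s : EReal) < b → 0 < deriv h s) ∧
          ∀ x ∈ U₀, u x = h ⟪x, e⟫ := by
  classical
  set U : Set (EuclideanSpace ℝ (Fin N)) := {x | gradient u x ≠ 0} with hU
  have hud : Differentiable ℝ u := hu.differentiable (by norm_num)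
  have hgC : ContDiff ℝ 2 (gradient u) := by
    have h1 : ContDiff ℝ 2 (fderiv ℝ u) := hu.fderiv_right (by norm_num)
    exact ((InnerProductSpace.toDual ℝ (EuclideanSpace ℝ (Fin N))).symm.contDiff).comp h1
  have hin : ∀ x w, fderiv ℝ u x w = ⟪gradient u x, w⟫ := by
    intro x w
    simp [gradient]
  have hUo : IsOpen U := isOpen_ne_fun hgC.continuous continuous_const
  have hx₀U : x₀ ∈ U := hx₀
  have hU₀o : IsOpen U₀ := hU₀ ▸ hUo.connectedComponentIn
  have hU₀U : U₀ ⊆ U := hU₀ ▸ connectedComponentIn_subset _ _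
  have hx₀' : x₀ ∈ U₀ := hU₀ ▸ mem_connectedComponentIn hx₀U
  have hU₀c : IsPreconnected U₀ := hU₀ ▸ isPreconnected_connectedComponentIn
  have hVconst : ∀ x ∈ U₀, NGrad u x = NGrad u x₀ := by
    intro x hx
    refine hU₀o.is_const_of_fderiv_eq_zero (𝕜 := ℝ) hU₀c ?_ ?_ hx hx₀'
    · intro y hy
      have hy' : gradient u y ≠ 0 := hU₀U hy
      have hd : DifferentiableAt ℝ (gradient u) y := hgC.differentiable (by norm_num) y
      have : DifferentiableAt ℝ (NGrad u) y :=
        ((hd.norm ℝ hy').inv (norm_ne_zero_iff.2 hy')).smul hd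
      exact this.differentiableWithinAt
    · intro y hy
      exact hDV y (hU₀U hy)
  obtain ⟨e, he⟩ : ∃ e, e = NGrad u x₀ := ⟨_, rfl⟩
  rw [← he] at hVconst
  have hnorm : ‖e‖ = 1 := by
    rw [he, NGrad, norm_smul, norm_inv, norm_norm, inv_mul_cancel₀ (norm_ne_zero_iff.2 hx₀)]
  have hgrad : ∀ x ∈ U₀, gradient u x = ‖gradient u x‖ • e := by
    intro x hx
    rw [← hVconst x hx, NGrad, smul_smul,
      mul_inv_cancel₀ (norm_ne_zero_iff.2 (hU₀U hx)), one_smul]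
  have hperp : ∀ x ∈ U₀, ∀ w, ⟪w, e⟫ = 0 → fderiv ℝ u x w = 0 := by
    intro x hx w hw
    rw [hin, hgrad x hx, real_inner_smul_left, real_inner_comm, hw, mul_zero]
  have hseg : ∀ y z, segment ℝ y z ⊆ U₀ → ⟪z - y, e⟫ = 0 → u z = u y := by
    intro y z hs hw
    obtain ⟨c, hc, hc'⟩ := domain_mvt (f := u) (f' := fun x => fderiv ℝ u x) (s := Set.univ)
      (fun x _ => (hud x).hasFDerivAt.hasFDerivWithinAt) convex_univ
      (Set.mem_univ y) (Set.mem_univ z)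
    have := hperp c (hs hc) _ hw
    rw [this] at hc'
    linarith
  have hclosed : ∀ y ∈ closure U₀, y ∈ U → y ∈ U₀ := by
    intro y hy hyU
    obtain ⟨r, hr, hb⟩ := Metric.isOpen_iff.1 hUo y hyU
    obtain ⟨z, hz, hz'⟩ := Metric.mem_closure_iff.1 hy r hr
    have hzb : z ∈ Metric.ball y r := by rw [Metric.mem_ball, dist_comm]; exact hz'
    have hsub := (convex_ball y r).isPreconnected.subset_connectedComponentIn hzb hb
    have hzc : z ∈ connectedComponentIn U x₀ := hU₀ ▸ hz
    rw [← connectedComponentIn_eq hzc, ← hU₀] at hsub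
    exact hsub (Metric.mem_ball_self hr)
  have hloc : ∀ p ∈ U₀, ∃ r > 0, ∀ v, ‖v‖ < r → ⟪v, e⟫ = 0 →
      p + v ∈ U₀ ∧ gradient u (p + v) = gradient u p := by
    intro p hp
    obtain ⟨r, hr, hb⟩ := Metric.isOpen_iff.1 hU₀o p hp
    refine ⟨r, hr, fun v hv hve => ?_⟩
    have hpv : p + v ∈ Metric.ball p r := by simpa [Metric.mem_ball, dist_eq_norm] using hv
    refine ⟨hb hpv, ?_⟩
    have hev : (fun y => u (y + v)) =ᶠ[nhds p] u := by
      have h1 : ∀ᶠ y in nhds p, y ∈ Metric.ball p r := Metric.ball_mem_nhds p hr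
      have h2 : ∀ᶠ y in nhds p, y + v ∈ Metric.ball p r :=
        (continuous_id.add continuous_const).continuousAt.eventually
          (Metric.isOpen_ball.mem_nhds hpv)
      filter_upwards [h1, h2] with y hy hy'
      exact hseg y (y + v) (((convex_ball p r).segment_subset hy hy').trans hb) (by simpa using hve)
    have h3 := hev.fderiv_eq (𝕜 := ℝ)
    rw [fderiv_comp_add_right] at h3
    simp only [gradient, h3]
  have hline : ∀ x ∈ U₀, ∀ w, ⟪w, e⟫ = 0 → ∀ t : ℝ, x + t • w ∈ U₀ := by
    intro x hx w hw
    let A : Set ℝ := {t | x + t • w ∈ U₀ ∧ gradient u (x + t • w) = gradient u x}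
    have hc : Continuous fun t : ℝ => x + t • w := by fun_prop
    have hA : IsClopen A := by
      constructor
      · refine isClosed_of_closure_subset fun t ht => ?_
        have hcl : IsClosed {t : ℝ | gradient u (x + t • w) = gradient u x} :=
          isClosed_eq (hgC.continuous.comp hc) continuous_const
        have h1 : gradient u (x + t • w) = gradient u x :=
          closure_minimal (fun s hs => hs.2) hcl ht
        refine ⟨hclosed _ ?_ ?_, h1⟩
        · exact map_mem_closure (f := fun t : ℝ => x + t • w) hc ht (fun s (hs : s ∈ A) => hs.1)
        · change gradient u (x + t • w) ≠ 0
          rw [h1]; exact hU₀U hx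
      · rw [isOpen_iff_mem_nhds]
        intro t ht
        obtain ⟨r, hr, H⟩ := hloc _ ht.1
        have hc2 : Continuous fun s : ℝ => ‖(s - t) • w‖ := by fun_prop
        have : ∀ᶠ s in nhds t, ‖(s - t) • w‖ < r :=
          hc2.continuousAt.eventually (gt_mem_nhds (by simpa using hr))
        filter_upwards [this] with s hs
        have := H _ hs (by rw [real_inner_smul_left, hw, mul_zero])
        have e1 : x + t • w + (s - t) • w = x + s • w := by rw [sub_smul]; abel
        rw [e1] at this
        exact ⟨this.1, this.2.trans ht.2⟩
    have hAu : A = Set.univ := hA.eq_univ ⟨0, by simpa [A] using hx⟩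
    intro t
    have : t ∈ A := hAu ▸ Set.mem_univ t
    exact this.1
  have hee : ⟪e, e⟫ = (1 : ℝ) := by rw [real_inner_self_eq_norm_sq, hnorm]; norm_num
  have hsat : ∀ x y, x ∈ U₀ → ⟪y, e⟫ = (⟪x, e⟫ : ℝ) → y ∈ U₀ ∧ u y = u x := by
    intro x y hx hxy
    have hw : ⟪y - x, e⟫ = (0 : ℝ) := by rw [inner_sub_left, hxy, sub_self]
    have hl := hline x hx (y - x) hw
    refine ⟨by simpa using hl 1, hseg x y ?_ hw⟩
    rw [segment_eq_image']
    rintro _ ⟨t, -, rfl⟩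
    exact hl t
  have hse : ∀ s : ℝ, ⟪s • e, e⟫ = s := fun s => by rw [real_inner_smul_left, hee, mul_one]
  let I : Set ℝ := {s | s • e ∈ U₀}
  have hmem : ∀ x, x ∈ U₀ ↔ ⟪x, e⟫ ∈ I := fun x =>
    ⟨fun hx => (hsat x _ hx (hse _)).1, fun hx => (hsat _ x hx (hse _).symm).1⟩
  have hIo : IsOpen I := hU₀o.preimage (by fun_prop)
  have hIc : I.OrdConnected := by
    have : I = (fun x => (⟪x, e⟫ : ℝ)) '' U₀ := by
      ext s
      constructor
      · intro hs
        exact ⟨s • e, hs, hse s⟩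
      · rintro ⟨x, hx, rfl⟩
        exact (hmem x).1 hx
    rw [this]
    exact (hU₀c.image _ (by fun_prop)).ordConnected
  let a : EReal := sInf ((fun s : ℝ => (s : EReal)) '' I)
  let b : EReal := sSup ((fun s : ℝ => (s : EReal)) '' I)
  have hI : ∀ s : ℝ, s ∈ I ↔ a < (s : EReal) ∧ (s : EReal) < b := by
    intro s
    constructor
    · intro hs
      obtain ⟨r, hr, hb⟩ := Metric.isOpen_iff.1 hIo s hs
      have h1 : s - r / 2 ∈ I := hb (by
        rw [Metric.mem_ball, Real.dist_eq, abs_lt]; constructor <;> linarith)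
      have h2 : s + r / 2 ∈ I := hb (by
        rw [Metric.mem_ball, Real.dist_eq, abs_lt]; constructor <;> linarith)
      constructor
      · refine lt_of_le_of_lt (sInf_le (Set.mem_image_of_mem _ h1)) ?_
        exact EReal.coe_lt_coe_iff.2 (by linarith)
      · refine lt_of_lt_of_le ?_ (le_sSup (Set.mem_image_of_mem _ h2))
        exact EReal.coe_lt_coe_iff.2 (by linarith)
    · rintro ⟨h1, h2⟩
      obtain ⟨_, ⟨s1, hs1, rfl⟩, h1⟩ := sInf_lt_iff.1 h1
      obtain ⟨_, ⟨s2, hs2, rfl⟩, h2⟩ := lt_sSup_iff.1 h2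
      exact hIc.out hs1 hs2 ⟨(EReal.coe_lt_coe_iff.1 h1).le, (EReal.coe_lt_coe_iff.1 h2).le⟩
  have h0 := (hI _).1 ((hmem x₀).1 hx₀')
  refine ⟨e, hnorm, hVconst, a, b, h0.1.trans h0.2, ?_, fun s => u (s • e), ?_, ?_, ?_⟩
  · ext x
    exact (hmem x).trans (hI _)
  · have h2 : ContDiff ℝ 2 u := hu.of_le (by norm_num)
    exact (h2.comp (contDiff_id.smul contDiff_const)).contDiffOn
  · intro s hs1 hs2
    have hs : s • e ∈ U₀ := (hI s).2 ⟨hs1, hs2⟩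
    have h1 : HasDerivAt (fun s : ℝ => s • e) e s := by
      simpa using (hasDerivAt_id s).smul_const e
    have h2 := (hud (s • e)).hasFDerivAt.comp_hasDerivAt s h1
    have h3 : deriv (fun s : ℝ => u (s • e)) s = fderiv ℝ u (s • e) e := h2.deriv
    rw [h3, hin, hgrad _ hs, real_inner_smul_left, hee, mul_one]
    exact norm_pos_iff.2 (hU₀U hs)
  · intro x hx
    exact ((hsat x _ hx (hse _)).2).symm
end
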